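/- arXiv:2102.06939 — 7 statements merged into one kernel-verified Lean document; each statement's English description precedes it below -/
import Mathlib

section
/- Let U be a finite set and k ≥ 2 an integer with k ≤ |U|. Let d be the unique positive integer with 2^{d-1} < k/ln k ≤ 2^d, and set d1 = 2^d, d2 = ⌈8 ln k⌉, d3 = ⌈13 ln k⌉². Let H be a ⌈12 ln k⌉-wise independent family of functions from U to {0,...,d1-1}, and let H' be a universal family of functions from U to {0,...,d3-1}. Choose f uniformly at random from H, and choose the d1·d2 functions h_{j,i} (for j ∈ {0,...,d1-1}, i ∈ {1,...,d2}) independently and uniformly at random from H'. Then for every subset S ⊆ U of cardinality k, with probability at least 1 - 4/(k³ ln k) there exist k distinct indices i_0, ..., i_{k-1} ∈ {0,...,d1·d2·d3 - 1} such that: (1) |T_{i_j} ∩ S| = 1 for every j ∈ {0,...,k-1}; (2) S ⊆ ∪_{j ∈ {0,...,k-1}} T_{i_j}; and (3) T_{i_j} ∩ T_{i_l} = ∅ for all distinct j, l ∈ {0,...,k-1}. -/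
open Finset

/-- For `f : U → Fin d1` and a family `F` of functions
`F (j, i) : U → Fin d3` (for `j : Fin d1`, `i : Fin d2`), the set
`T a = { x | a ∈ G(x) }` where
`G(x) = { (f x)·d2·d3 + i·d3 + F (f x, i) x : i : Fin d2 }`. -/
def Tset {U : Type*} {d1 d2 d3 : ℕ} (f : U → Fin d1)
    (F : Fin d1 × Fin d2 → U → Fin d3) (a : ℕ) : Set U :=
  {x : U | ∃ i : Fin d2,
    a = (f x : ℕ) * d2 * d3 + (i : ℕ) * d3 + (F (f x, i) x : ℕ)}

/-! The choice fails only if some bucket `{x ∈ S | f x = j}` is large or is hashed injectively by no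
function of its row. A bucket with `κ` or more keys contains one of the `(#S).choose κ` sets of
size `κ`, each of which lands in bucket `j` with probability `1 / d1 ^ κ`; since `d1` is at least
`#S / log #S`, this happens with probability at most `1 / (#S) ^ 4`. On a bucket with fewer than
`κ ≤ √d3` keys, a random member of the universal family fails to be injective with probability at
most `1 / 2`, by Markov's inequality for the number of ordered colliding pairs, so all `d2`
independent attempts fail with probability at most `1 / 2 ^ d2 ≤ 1 / (#S) ^ 4`. A union bound over
the `d1` buckets gives the claimed probability.

Once every bucket has an injective row, each key takes the index assigned to it by that row of its
bucket. An index determines bucket, row and hash value, so if the sets `T_a` of two keys of `S`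
share an element of the universe, the two keys agree in all three and hence are equal. -/

section Counting

variable {α β ι κ : Type*}

theorem card_filter_exists_le [Fintype ι] {A : Finset α} {p : ι → α → Prop} {c : ℝ}
    [∀ j, DecidablePred (p j)] [DecidablePred fun a => ∃ j, p j a]
    (h : ∀ j, (#{a ∈ A | p j a} : ℝ) ≤ c) :
    (#{a ∈ A | ∃ j, p j a} : ℝ) ≤ Fintype.card ι * c := by
  classical
  have hunion : ({a ∈ A | ∃ j, p j a} : Finset α) = univ.biUnion fun j => {a ∈ A | p j a} := by
    ext a
    simp
  calc (#{a ∈ A | ∃ j, p j a} : ℝ) ≤ ∑ j, (#{a ∈ A | p j a} : ℝ) := by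
        rw [hunion]
        exact_mod_cast card_biUnion_le
    _ ≤ Fintype.card ι * c := by
        simpa using sum_le_card_nsmul univ _ c fun j _ => h j

theorem le_card_filter_product {A : Finset α} {B : Finset β} {p : α → Prop} {q : α → β → Prop}
    {ε δ : ℝ} [DecidablePred p] [∀ a, DecidablePred (q a)] (hδ : 0 ≤ δ)
    (hp : (#{a ∈ A | p a} : ℝ) ≤ ε * #A)
    (hq : ∀ a ∈ A, ¬ p a → (#{b ∈ B | q a b} : ℝ) ≤ δ * #B) :
    (1 - (ε + δ)) * (#A * #B) ≤ (#{x ∈ A ×ˢ B | ¬ p x.1 ∧ ¬ q x.1 x.2} : ℝ) := by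
  have hfiber : ∀ a ∈ A.filter (¬ p ·), (1 - δ) * #B ≤ (#{b ∈ B | ¬ q a b} : ℝ) := by
    intro a ha
    obtain ⟨haA, hpa⟩ := mem_filter.1 ha
    have hsplit : (#{b ∈ B | q a b} + #{b ∈ B | ¬ q a b} : ℝ) = #B := by
      exact_mod_cast card_filter_add_card_filter_not (s := B) (q a)
    linarith [hq a haA hpa]
  have hcard : #{x ∈ A ×ˢ B | ¬ p x.1 ∧ ¬ q x.1 x.2} =
      ∑ a ∈ A with ¬ p a, #{b ∈ B | ¬ q a b} := by
    simp only [card_filter, sum_product, ite_and, sum_filter]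
    exact sum_congr rfl fun a _ => by split_ifs <;> simp
  have hsplit : (#{a ∈ A | p a} + #{a ∈ A | ¬ p a} : ℝ) = #A := by
    exact_mod_cast card_filter_add_card_filter_not (s := A) p
  have hfirst : (1 - (ε + δ)) * #A ≤ (1 - δ) * (#{a ∈ A | ¬ p a} : ℝ) := by
    have : δ * (#{a ∈ A | ¬ p a} : ℝ) ≤ δ * #A := by
      gcongr
      exact filter_subset _ _
    linarith
  calc (1 - (ε + δ)) * (#A * #B) = (1 - (ε + δ)) * #A * #B := by ring
    _ ≤ (1 - δ) * (#{a ∈ A | ¬ p a} : ℝ) * #B := by gcongr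
    _ = (#{a ∈ A | ¬ p a} : ℕ) • ((1 - δ) * #B) := by rw [nsmul_eq_mul]; ring
    _ ≤ ∑ a ∈ A with ¬ p a, (#{b ∈ B | ¬ q a b} : ℝ) := card_nsmul_le_sum _ _ _ hfiber
    _ = #{x ∈ A ×ˢ B | ¬ p x.1 ∧ ¬ q x.1 x.2} := by rw [hcard]; push_cast; rfl

theorem card_filter_forall_row_le [Fintype ι] [Fintype κ] [DecidableEq ι] [DecidableEq κ]
    {K : Finset α} {p : α → Prop} [DecidablePred p] {c : ℝ}
    (hp : (#{a ∈ K | p a} : ℝ) ≤ c * #K) (j : ι) :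
    (#{F ∈ Fintype.piFinset fun _ : ι × κ => K | ∀ i, p (F (j, i))} : ℝ) ≤
      c ^ Fintype.card κ * #K ^ (Fintype.card ι * Fintype.card κ) := by
  have hsub : {F ∈ Fintype.piFinset fun _ : ι × κ => K | ∀ i, p (F (j, i))} ⊆
      Fintype.piFinset fun s : ι × κ => if s.1 = j then {a ∈ K | p a} else K := by
    intro F hF
    obtain ⟨hK, hrow⟩ := mem_filter.1 hF
    rw [Fintype.mem_piFinset] at hK ⊢
    rintro ⟨j', i⟩
    by_cases hj : j' = j
    · subst hj
      simpa using ⟨hK (j', i), hrow i⟩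
    · simpa [hj] using hK (j', i)
  calc (#{F ∈ Fintype.piFinset fun _ : ι × κ => K | ∀ i, p (F (j, i))} : ℝ)
      ≤ ∏ s : ι × κ, (#(if s.1 = j then {a ∈ K | p a} else K) : ℝ) := by
        exact_mod_cast (card_le_card hsub).trans_eq (Fintype.card_piFinset _)
    _ ≤ ∏ s : ι × κ, (if s.1 = j then c else 1) * (#K : ℝ) := by
        refine prod_le_prod (fun _ _ => Nat.cast_nonneg _) fun s _ => ?_
        split_ifs
        exacts [hp, (one_mul _).ge]
    _ = c ^ Fintype.card κ * #K ^ (Fintype.card ι * Fintype.card κ) := by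
        have hrow : ∀ j', ∏ _i : κ, (if j' = j then c else 1) =
            if j' = j then c ^ Fintype.card κ else 1 := fun j' => by split_ifs <;> simp
        simp only [prod_mul_distrib, Fintype.prod_prod_type, hrow, Fintype.prod_ite_eq',
          prod_const, card_univ, Fintype.card_prod]

end Counting

section HashFamilies

variable {α : Type*} {r κ : ℕ}

/-- A `κ`-wise independent family of hash functions. A list of `κ` distinct keys is encoded as an
injective function on `Fin κ`. -/
def IsIndependentFamily (κ : ℕ) (H : Finset (α → Fin r)) : Prop :=
  ∀ x : Fin κ → α, Function.Injective x → ∀ a : Fin κ → Fin r,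
    #{h ∈ H | ∀ l, h (x l) = a l} * r ^ κ = #H

/-- A universal family of hash functions: two distinct keys collide under a proportion at most
`1 / r` of its members. The inequality is multiplied by `r` to stay in `ℕ`. -/
def IsUniversalFamily (H : Finset (α → Fin r)) : Prop :=
  ∀ x y : α, x ≠ y → #{h ∈ H | h x = h y} * r ≤ #H

theorem IsIndependentFamily.card_filter_forall_mem_eq {H : Finset (α → Fin r)}
    (hH : IsIndependentFamily κ H) {A : Finset α} (hA : #A = κ) (a : α → Fin r) :
    #{h ∈ H | ∀ x ∈ A, h x = a x} * r ^ κ = #H := by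
  let e := A.equivFinOfCardEq hA
  have hforall : ∀ h : α → Fin r,
      (∀ x ∈ A, h x = a x) ↔ ∀ l, h (e.symm l) = a (e.symm l) := fun h =>
    Subtype.forall.symm.trans (e.symm.forall_congr_right (q := fun x : A => h x = a x)).symm
  simp only [hforall]
  exact hH (fun l => e.symm l) (Subtype.val_injective.comp e.symm.injective) _

theorem IsIndependentFamily.card_filter_le_card_fiber_mul_le {H : Finset (α → Fin r)}
    (hH : IsIndependentFamily κ H) (S : Finset α) (j : Fin r) :
    #{h ∈ H | κ ≤ #{x ∈ S | h x = j}} * r ^ κ ≤ (#S).choose κ * #H := by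
  classical
  have hsub : {h ∈ H | κ ≤ #{x ∈ S | h x = j}} ⊆
      (S.powersetCard κ).biUnion fun A => {h ∈ H | ∀ x ∈ A, h x = j} := by
    intro h hh
    obtain ⟨hhH, hκ⟩ := mem_filter.1 hh
    obtain ⟨A, hA, hAκ⟩ := exists_subset_card_eq hκ
    exact mem_biUnion.2 ⟨A, mem_powersetCard.2 ⟨hA.trans (filter_subset _ _), hAκ⟩,
      mem_filter.2 ⟨hhH, fun x hx => (mem_filter.1 (hA hx)).2⟩⟩
  calc #{h ∈ H | κ ≤ #{x ∈ S | h x = j}} * r ^ κ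
      ≤ (∑ A ∈ S.powersetCard κ, #{h ∈ H | ∀ x ∈ A, h x = j}) * r ^ κ :=
        Nat.mul_le_mul_right _ ((card_le_card hsub).trans card_biUnion_le)
    _ = ∑ _A ∈ S.powersetCard κ, #H := by
        rw [sum_mul]
        exact sum_congr rfl fun A hA =>
          hH.card_filter_forall_mem_eq (mem_powersetCard.1 hA).2 fun _ => j
    _ = (#S).choose κ * #H := by rw [sum_const, card_powersetCard, smul_eq_mul]

theorem IsIndependentFamily.card_filter_exists_le_card_fiber_le {H : Finset (α → Fin r)}
    (hH : IsIndependentFamily κ H) (S : Finset α) :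
    (#{h ∈ H | ∃ j, κ ≤ #{x ∈ S | h x = j}} : ℝ) ≤
      r * ((#S).choose κ / (r : ℝ) ^ κ) * #H := by
  have hfiber : ∀ j : Fin r, (#{h ∈ H | κ ≤ #{x ∈ S | h x = j}} : ℝ) ≤
      (#S).choose κ / (r : ℝ) ^ κ * #H := by
    intro j
    have hr : (0 : ℝ) < r := by exact_mod_cast j.pos
    rw [div_mul_eq_mul_div, le_div_iff₀ (by positivity)]
    exact_mod_cast hH.card_filter_le_card_fiber_mul_le S j
  simpa [mul_assoc] using card_filter_exists_le hfiber

theorem two_le_card_filter_offDiag_of_not_injOn {β : Type*} [DecidableEq β]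
    {A : Finset α} {h : α → β} (hA : ¬ Set.InjOn h A) :
    2 ≤ #{p ∈ A.offDiag | h p.1 = h p.2} := by
  simp only [Set.InjOn, mem_coe] at hA
  push Not at hA
  obtain ⟨x, hx, y, hy, hxy, hne⟩ := hA
  refine one_lt_card.2 ⟨(x, y), ?_, (y, x), ?_, by simp [hne]⟩
  · exact mem_filter.2 ⟨mem_offDiag.2 ⟨hx, hy, hne⟩, hxy⟩
  · exact mem_filter.2 ⟨mem_offDiag.2 ⟨hy, hx, hne.symm⟩, hxy.symm⟩

theorem IsUniversalFamily.sum_card_filter_offDiag_mul_le {H : Finset (α → Fin r)}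
    (hH : IsUniversalFamily H) (A : Finset α) :
    (∑ h ∈ H, #{p ∈ A.offDiag | h p.1 = h p.2}) * r ≤ #A.offDiag * #H := by
  calc (∑ h ∈ H, #{p ∈ A.offDiag | h p.1 = h p.2}) * r
      = ∑ p ∈ A.offDiag, #{h ∈ H | h p.1 = h p.2} * r := by
        rw [← sum_mul]
        simp only [card_filter]
        rw [sum_comm]
    _ ≤ #A.offDiag * #H :=
        sum_le_card_nsmul _ _ _ fun p hp => hH _ _ (mem_offDiag.1 hp).2.2

open Classical in
theorem IsUniversalFamily.card_filter_not_injOn_le {H : Finset (α → Fin r)}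
    (hH : IsUniversalFamily H) (hr : 0 < r) {A : Finset α} (hA : #A.offDiag ≤ r) :
    (#{h ∈ H | ¬ Set.InjOn h A} : ℝ) ≤ 1 / 2 * #H := by
  have hmarkov : #{h ∈ H | ¬ Set.InjOn h A} * 2 ≤
      ∑ h ∈ H, #{p ∈ A.offDiag | h p.1 = h p.2} :=
    (card_nsmul_le_sum _ _ _ fun _ hh =>
      two_le_card_filter_offDiag_of_not_injOn (mem_filter.1 hh).2).trans
      (sum_le_sum_of_subset (filter_subset _ _))
  have hmul : #{h ∈ H | ¬ Set.InjOn h A} * 2 * r ≤ #H * r :=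
    calc #{h ∈ H | ¬ Set.InjOn h A} * 2 * r ≤ #A.offDiag * #H :=
          (Nat.mul_le_mul_right r hmarkov).trans (hH.sum_card_filter_offDiag_mul_le A)
      _ ≤ #H * r := by rw [mul_comm]; gcongr
  have hhalf : (#{h ∈ H | ¬ Set.InjOn h A} * 2 : ℝ) ≤ #H := by
    exact_mod_cast Nat.le_of_mul_le_mul_right hmul hr
  linarith

open Classical in
theorem IsUniversalFamily.card_filter_exists_row_not_injOn_le {ι ι' : Type*} [Fintype ι]
    [Fintype ι'] [DecidableEq ι] [DecidableEq ι'] {H : Finset (α → Fin r)}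
    (hH : IsUniversalFamily H) (hr : 0 < r) {A : ι → Finset α} (hA : ∀ j, #(A j).offDiag ≤ r) :
    (#{F ∈ Fintype.piFinset fun _ : ι × ι' => H |
        ∃ j, ∀ i, ¬ Set.InjOn (F (j, i)) (A j)} : ℝ) ≤
      Fintype.card ι * (1 / 2) ^ Fintype.card ι' *
        #(Fintype.piFinset fun _ : ι × ι' => H) := by
  have hrow : ∀ j, (#{F ∈ Fintype.piFinset fun _ : ι × ι' => H |
      ∀ i, ¬ Set.InjOn (F (j, i)) (A j)} : ℝ) ≤
      (1 / 2) ^ Fintype.card ι' * #H ^ (Fintype.card ι * Fintype.card ι') := fun j =>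
    card_filter_forall_row_le (hH.card_filter_not_injOn_le hr (hA j)) j
  simpa [mul_assoc] using card_filter_exists_le hrow

end HashFamilies

section Slots

variable {U : Type*} {d1 d2 d3 : ℕ}

/-- The number `g(f(x), i, x)` of the paper, the `i`-th of the `d2` indices `a` with `x ∈ T_a`.
It is packaged as an iterated `finProdFinEquiv` so that its range and the injectivity of mixed
radix notation come for free; `coe_slot` is the explicit formula. -/
def slot (f : U → Fin d1) (F : Fin d1 × Fin d2 → U → Fin d3) (i : Fin d2) (x : U) :
    Fin (d1 * d2 * d3) :=
  finProdFinEquiv (finProdFinEquiv (f x, i), F (f x, i) x)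

/-- Every bucket `{x ∈ S | f x = j}` is mapped injectively by one of the `d2` functions of
row `j`: the success event for the random choice of `f` and `F`. -/
def SeparatesFibers (f : U → Fin d1) (F : Fin d1 × Fin d2 → U → Fin d3) (S : Finset U) : Prop :=
  ∀ j, ∃ i, Set.InjOn (F (j, i)) ({x ∈ S | f x = j} : Finset U)

/-- There are `k` distinct indices whose sets `T_a` are pairwise disjoint, cover `S`, and
contain exactly one element of `S` each. -/
def HasIsolatingIndices (k : ℕ) (f : U → Fin d1) (F : Fin d1 × Fin d2 → U → Fin d3)
    (S : Finset U) : Prop :=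
  ∃ ι : Fin k → ℕ, Function.Injective ι ∧
    (∀ j : Fin k, ι j < d1 * d2 * d3) ∧
    (∀ j : Fin k, ∃! x : U, x ∈ S ∧ x ∈ Tset f F (ι j)) ∧
    (∀ x ∈ S, ∃ j : Fin k, x ∈ Tset f F (ι j)) ∧
    (∀ j l : Fin k, j ≠ l → Tset f F (ι j) ∩ Tset f F (ι l) = ∅)

variable {f : U → Fin d1} {F : Fin d1 × Fin d2 → U → Fin d3} {S : Finset U}

theorem coe_slot (i : Fin d2) (x : U) :
    (slot f F i x : ℕ) = (f x : ℕ) * d2 * d3 + (i : ℕ) * d3 + (F (f x, i) x : ℕ) := by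
  simp only [slot, finProdFinEquiv_apply_val]
  ring

theorem mem_Tset_coe_iff {x : U} {a : Fin (d1 * d2 * d3)} :
    x ∈ Tset f F a ↔ ∃ i, a = slot f F i x := by
  simp only [Tset, Set.mem_ofPred_eq, Fin.ext_iff, coe_slot]

theorem slot_eq_slot_iff {i i' : Fin d2} {x y : U} :
    slot f F i x = slot f F i' y ↔
      f x = f y ∧ i = i' ∧ F (f x, i) x = F (f y, i') y := by
  simp only [slot, EmbeddingLike.apply_eq_iff_eq, Prod.mk.injEq, and_assoc]

theorem exists_slot_separating (h : SeparatesFibers f F S) :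
    ∃ s : U → Fin (d1 * d2 * d3), (∀ x, x ∈ Tset f F (s x)) ∧
      ∀ x ∈ S, ∀ y ∈ S, ∀ z, z ∈ Tset f F (s x) → z ∈ Tset f F (s y) → x = y := by
  choose c hc using h
  refine ⟨fun x => slot f F (c (f x)) x, fun x => mem_Tset_coe_iff.2 ⟨_, rfl⟩, ?_⟩
  intro x hx y hy z hzx hzy
  obtain ⟨i, hi⟩ := mem_Tset_coe_iff.1 hzx
  obtain ⟨i', hi'⟩ := mem_Tset_coe_iff.1 hzy
  obtain ⟨hfx, rfl, hFx⟩ := slot_eq_slot_iff.1 hi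
  obtain ⟨hfy, rfl, hFy⟩ := slot_eq_slot_iff.1 hi'
  have hfxy : f x = f y := hfx.trans hfy.symm
  refine hc (f x) (by simp [hx]) (by simp [hy, hfxy]) ?_
  rw [hFx, hfxy, hFy]

theorem SeparatesFibers.hasIsolatingIndices (h : SeparatesFibers f F S) :
    HasIsolatingIndices #S f F S := by
  obtain ⟨s, hself, hsep⟩ := exists_slot_separating h
  let e := S.equivFin
  have hdisj : ∀ {j l : Fin #S} {z : U}, z ∈ Tset f F (s (e.symm j)) →
      z ∈ Tset f F (s (e.symm l)) → j = l := fun {j l z} hj hl =>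
    e.symm.injective (Subtype.ext (hsep _ (e.symm j).2 _ (e.symm l).2 z hj hl))
  refine ⟨fun j => s (e.symm j), fun j l hjl => ?_, fun j => Fin.is_lt _, fun j => ?_,
    fun x hx => ⟨e ⟨x, hx⟩, by simpa using hself x⟩, fun j l hjl => ?_⟩
  · have hmem := hself (e.symm j)
    exact hdisj hmem ((Fin.ext hjl : s (e.symm j) = s (e.symm l)) ▸ hmem)
  · exact ⟨e.symm j, ⟨(e.symm j).2, hself _⟩,
      fun y hy => hsep y hy.1 _ (e.symm j).2 y (hself y) hy.2⟩
  · exact Set.eq_empty_of_forall_notMem fun z hz => hjl (hdisj hz.1 hz.2)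

open Classical in
theorem le_card_filter_separatesFibers {κ : ℕ} {H : Finset (U → Fin d1)}
    (hH : IsIndependentFamily κ H) {H' : Finset (U → Fin d3)} (hH' : IsUniversalFamily H')
    (hd3 : 0 < d3) (hκ : κ ^ 2 ≤ d3) (S : Finset U) :
    (1 - (d1 * ((#S).choose κ / (d1 : ℝ) ^ κ) + d1 * (1 / 2) ^ d2)) *
        (#H * (#H' : ℝ) ^ (d1 * d2)) ≤
      #{fF ∈ H ×ˢ Fintype.piFinset fun _ : Fin d1 × Fin d2 => H' |
        SeparatesFibers fF.1 fF.2 S} := by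
  have hrows : ∀ f ∈ H, (¬ ∃ j, κ ≤ #{x ∈ S | f x = j}) →
      (#{F ∈ Fintype.piFinset fun _ : Fin d1 × Fin d2 => H' |
        ∃ j, ∀ i, ¬ Set.InjOn (F (j, i)) ({x ∈ S | f x = j} : Finset U)} : ℝ) ≤
      d1 * (1 / 2) ^ d2 * #(Fintype.piFinset fun _ : Fin d1 × Fin d2 => H') := by
    intro f _ hf
    push Not at hf
    have hpairs : ∀ j, #({x ∈ S | f x = j} : Finset U).offDiag ≤ d3 := fun j => by
      rw [offDiag_card]
      nlinarith [hf j, Nat.sub_le (#{x ∈ S | f x = j} * #{x ∈ S | f x = j}) #{x ∈ S | f x = j}]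
    simpa using hH'.card_filter_exists_row_not_injOn_le (ι' := Fin d2) hd3 hpairs
  have hprod := le_card_filter_product (by positivity)
    (hH.card_filter_exists_le_card_fiber_le S) hrows
  have hcard : (#(Fintype.piFinset fun _ : Fin d1 × Fin d2 => H') : ℝ) =
      (#H' : ℝ) ^ (d1 * d2) := by simp
  rw [hcard] at hprod
  refine hprod.trans (Nat.cast_le.2 (card_le_card (monotone_filter_right _ ?_)))
  rintro fF - ⟨-, hsep⟩
  push Not at hsep
  exact hsep

end Slots

section Estimates

theorem choose_div_pow_le_exp_neg {n m : ℕ} {D : ℝ} (hD : 0 < D)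
    (h : Real.exp 2 * n ≤ D * m) : n.choose m / D ^ m ≤ Real.exp (-m) := by
  have hn : n / D ≤ m / Real.exp 2 := by
    rw [div_le_div_iff₀ hD (Real.exp_pos 2)]
    linarith
  calc n.choose m / D ^ m ≤ (n : ℝ) ^ m / m.factorial / D ^ m := by
        gcongr
        exact Nat.choose_le_pow_div m n
    _ = (n / D) ^ m / m.factorial := by rw [div_pow, div_right_comm]
    _ ≤ (m / Real.exp 2) ^ m / m.factorial := by gcongr
    _ = (m : ℝ) ^ m / m.factorial / Real.exp (m * 2) := by
        rw [div_pow, div_right_comm, Real.exp_nat_mul]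
    _ ≤ Real.exp m / Real.exp (m * 2) := by
        gcongr
        exact Real.pow_div_factorial_le_exp _ (Nat.cast_nonneg _) _
    _ = Real.exp (-m) := by
        rw [← Real.exp_sub]
        ring_nf

theorem exp_two_le_eight : Real.exp 2 ≤ 8 := by
  calc Real.exp 2 = Real.exp 1 ^ 2 := by rw [← Real.exp_nat_mul]; norm_num
    _ ≤ 2.8 ^ 2 := by gcongr; linarith [Real.exp_one_lt_d9]
    _ ≤ 8 := by norm_num

theorem half_pow_le_exp_neg_half (m : ℕ) : (1 / 2 : ℝ) ^ m ≤ Real.exp (-(m / 2)) := by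
  have hhalf : (1 / 2 : ℝ) = Real.exp (-Real.log 2) := by
    rw [Real.exp_neg, Real.exp_log two_pos, one_div]
  rw [hhalf, ← Real.exp_nat_mul, Real.exp_le_exp]
  nlinarith [Real.log_two_gt_d9, (Nat.cast_nonneg m : (0 : ℝ) ≤ m)]

theorem exp_neg_le_inv_pow_of_mul_log_le {n : ℕ} {x t : ℝ} (hx : 0 < x)
    (h : n * Real.log x ≤ t) : Real.exp (-t) ≤ (x ^ n)⁻¹ := by
  rw [Real.exp_neg, ← Real.exp_log (pow_pos hx n), Real.log_pow]
  gcongr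

theorem mul_choose_div_pow_add_half_pow_le {k m κ D : ℕ} (hk : 2 ≤ k)
    (hD : k / Real.log k ≤ D) (hD' : (D : ℝ) ≤ 2 * (k / Real.log k))
    (hm : 8 * Real.log k ≤ m) (hκ : 8 * Real.log k ≤ κ) :
    D * (k.choose κ / (D : ℝ) ^ κ) + D * (1 / 2) ^ m ≤ 4 / ((k : ℝ) ^ 3 * Real.log k) := by
  have hk0 : (0 : ℝ) < k := by positivity
  have hlog : 0 < Real.log k := Real.log_pos (by exact_mod_cast hk)
  have hD0 : (0 : ℝ) < D := lt_of_lt_of_le (by positivity) hD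
  have hload : Real.exp 2 * k ≤ D * κ :=
    calc Real.exp 2 * k ≤ 8 * k := by gcongr; exact exp_two_le_eight
      _ = k / Real.log k * (8 * Real.log k) := by field_simp
      _ ≤ D * κ := by gcongr
  have hchoose : (k.choose κ : ℝ) / (D : ℝ) ^ κ ≤ ((k : ℝ) ^ 4)⁻¹ :=
    (choose_div_pow_le_exp_neg hD0 hload).trans
      (exp_neg_le_inv_pow_of_mul_log_le hk0 (by push_cast; linarith))
  have hhalf : (1 / 2 : ℝ) ^ m ≤ ((k : ℝ) ^ 4)⁻¹ :=
    (half_pow_le_exp_neg_half m).trans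
      (exp_neg_le_inv_pow_of_mul_log_le hk0 (by push_cast; linarith))
  calc D * (k.choose κ / (D : ℝ) ^ κ) + D * (1 / 2) ^ m
      ≤ 2 * (k / Real.log k) * ((k : ℝ) ^ 4)⁻¹ + 2 * (k / Real.log k) * ((k : ℝ) ^ 4)⁻¹ := by
        gcongr
    _ = 4 / ((k : ℝ) ^ 3 * Real.log k) := by
        field_simp
        norm_num

end Estimates

open Classical in
theorem stmt2_general {U : Type*} {d1 d2 d3 κ : ℕ} (S : Finset U) (hS : 2 ≤ #S)
    (hd1 : #S / Real.log #S ≤ d1) (hd1' : (d1 : ℝ) ≤ 2 * (#S / Real.log #S))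
    (hd2 : 8 * Real.log #S ≤ d2) (hκ : 8 * Real.log #S ≤ κ) (hd3 : κ ^ 2 ≤ d3)
    {H : Finset (U → Fin d1)} (hH : IsIndependentFamily κ H)
    {H' : Finset (U → Fin d3)} (hH' : IsUniversalFamily H') :
    (1 - 4 / ((#S : ℝ) ^ 3 * Real.log #S)) * (#H * (#H' : ℝ) ^ (d1 * d2)) ≤
      #{fF ∈ H ×ˢ Fintype.piFinset fun _ : Fin d1 × Fin d2 => H' |
        HasIsolatingIndices #S fF.1 fF.2 S} := by
  have hlog : 0 < Real.log #S := Real.log_pos (by exact_mod_cast hS)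
  have hκ0 : 0 < κ := Nat.cast_pos.1 (lt_of_lt_of_le (by positivity) hκ)
  have hd3pos : 0 < d3 := (pow_pos hκ0 2).trans_le hd3
  calc (1 - 4 / ((#S : ℝ) ^ 3 * Real.log #S)) * (#H * (#H' : ℝ) ^ (d1 * d2))
      ≤ (1 - (d1 * ((#S).choose κ / (d1 : ℝ) ^ κ) + d1 * (1 / 2) ^ d2)) *
          (#H * (#H' : ℝ) ^ (d1 * d2)) := by
        gcongr
        exact mul_choose_div_pow_add_half_pow_le hS hd1 hd1' hd2 hκ
    _ ≤ #{fF ∈ H ×ˢ Fintype.piFinset fun _ : Fin d1 × Fin d2 => H' |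
          SeparatesFibers fF.1 fF.2 S} :=
        le_card_filter_separatesFibers hH hH' hd3pos hd3 S
    _ ≤ #{fF ∈ H ×ˢ Fintype.piFinset fun _ : Fin d1 × Fin d2 => H' |
          HasIsolatingIndices #S fF.1 fF.2 S} := by
        gcongr with fF
        exact SeparatesFibers.hasIsolatingIndices

/- **Statement 2.** Let `U` be finite, `2 ≤ k ≤ |U|`, `d` the positive integer
with `2^(d-1) < k/ln k ≤ 2^d`, `d1 = 2^d`, `d2 = ⌈8 ln k⌉`, `d3 = ⌈13 ln k⌉²`.
Let `Hfam` be a `⌈12 ln k⌉`-wise independent family of functions `U → Fin d1`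
and `Hfam'` a universal family of functions `U → Fin d3`.  Choosing `f`
uniformly from `Hfam` and the `d1·d2` functions `h_{j,i}` independently and
uniformly from `Hfam'`, for every `S ⊆ U` of cardinality `k`, with probability
at least `1 - 4/(k³ ln k)` there exist `k` distinct indices
`ι 0, …, ι (k-1) < d1·d2·d3` such that each `T (ι j)` meets `S` in exactly one
element, `S ⊆ ⋃ j, T (ι j)`, and the `T (ι j)` are pairwise disjoint. -/

open Classical in
theorem stmt2 {U : Type*} [Fintype U] [DecidableEq U]
    (k : ℕ) (hk : 2 ≤ k) (hkU : k ≤ Fintype.card U)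
    (d : ℕ) (hd : 0 < d)
    (hdlow : (2 : ℝ) ^ (d - 1) < (k : ℝ) / Real.log k)
    (hdhigh : (k : ℝ) / Real.log k ≤ (2 : ℝ) ^ d)
    (d1 d2 d3 : ℕ) (hd1 : d1 = 2 ^ d)
    (hd2 : d2 = ⌈(8 : ℝ) * Real.log k⌉₊)
    (hd3 : d3 = ⌈(13 : ℝ) * Real.log k⌉₊ ^ 2)
    (Hfam : Finset (U → Fin d1)) (hHne : Hfam.Nonempty)
    (hHindep : ∀ x : Fin ⌈(12 : ℝ) * Real.log k⌉₊ → U, Function.Injective x →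
      ∀ a : Fin ⌈(12 : ℝ) * Real.log k⌉₊ → Fin d1,
        (Hfam.filter (fun h => ∀ l, h (x l) = a l)).card *
            d1 ^ (⌈(12 : ℝ) * Real.log k⌉₊ : ℕ) = Hfam.card)
    (Hfam' : Finset (U → Fin d3)) (hH'ne : Hfam'.Nonempty)
    (hH'univ : ∀ x y : U, x ≠ y →
      (Hfam'.filter (fun h => h x = h y)).card * d3 ≤ Hfam'.card)
    (S : Finset U) (hS : S.card = k) :
    ((1 : ℝ) - 4 / ((k : ℝ) ^ 3 * Real.log k)) *
        ((Hfam.card : ℝ) * (Hfam'.card : ℝ) ^ (d1 * d2)) ≤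
      (((Hfam ×ˢ Fintype.piFinset (fun _ : Fin d1 × Fin d2 => Hfam')).filter
        (fun fF : (U → Fin d1) × (Fin d1 × Fin d2 → U → Fin d3) =>
          ∃ ι : Fin k → ℕ, Function.Injective ι ∧
            (∀ j : Fin k, ι j < d1 * d2 * d3) ∧
            (∀ j : Fin k, ∃! x : U, x ∈ S ∧ x ∈ Tset fF.1 fF.2 (ι j)) ∧
            (∀ x ∈ S, ∃ j : Fin k, x ∈ Tset fF.1 fF.2 (ι j)) ∧
            (∀ j l : Fin k, j ≠ l →
              Tset fF.1 fF.2 (ι j) ∩ Tset fF.1 fF.2 (ι l) = ∅))).card : ℝ) := by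
  subst hd1 hd2 hd3 hS
  have hd1' : (2 : ℝ) ^ d ≤ 2 * (#S / Real.log #S) := by
    rw [← mul_pow_sub_one hd.ne']
    gcongr
  exact stmt2_general S hk (by exact_mod_cast hdhigh) (by exact_mod_cast hd1') (Nat.le_ceil _)
    (le_trans (by gcongr; norm_num) (Nat.le_ceil _)) (by gcongr; norm_num) hHindep hH'univ
end

section
/- Let U be a finite set and k ≥ 2 an integer with k ≤ |U|. Let d be the unique positive integer with 2^{d-1} < k/ln k ≤ 2^d, and set d1 = 2^d. Let H be a ⌈12 ln k⌉-wise independent family of functions from U to {0,...,d1-1}. Then for every subset S ⊆ U of cardinality k, for f chosen uniformly at random from H, the probability that there exists some j ∈ {0,...,d1-1} with |{ y ∈ S : f(y) = j }| ≥ 13 ln k is at most 2/(k³ ln k); equivalently, with probability at least 1 - 2/(k³ ln k), every j ∈ {0,...,d1-1} satisfies |{ y ∈ S : f(y) = j }| < 13 ln k. -/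
open Finset

/-!
If `f` sends at least `κ` keys of `S` to `v`, it sends all keys of some `κ`-element subset of `S`
to `v`. For a given subset this has probability `|V|^(-κ)`, so with average load
`x = |S| / |V|` the union bound over subsets gives at most `(|S| choose κ) / |V|^κ ≤ x^κ / κ!`.
As soon as `c * x ≤ κ`, one term of the exponential series shows `x^κ / κ! ≤ (e / c)^κ`. For
`x ≤ log |S|`, `c = 12` and `κ = ⌈12 log |S|⌉` this is at most `|S|⁻¹²`, which leaves ample room
for a union bound over `v`.
-/

section Estimates

open scoped Nat

lemma pow_div_factorial_le_exp_one_div_pow {x c : ℝ} {n : ℕ} (hx : 0 ≤ x) (hc : 0 < c)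
    (hn : c * x ≤ n) : x ^ n / n ! ≤ (Real.exp 1 / c) ^ n :=
  calc x ^ n / n ! = (c * x) ^ n / n ! / c ^ n := by rw [mul_pow]; field_simp
    _ ≤ Real.exp (c * x) / c ^ n := by
        gcongr
        exact Real.pow_div_factorial_le_exp _ (by positivity) n
    _ ≤ Real.exp n / c ^ n := by gcongr
    _ = (Real.exp 1 / c) ^ n := by rw [div_pow, Real.exp_one_pow]

lemma choose_div_pow_le_exp_one_div_pow {c : ℝ} {m n r : ℕ} (hc : 0 < c) (hr : 0 < r)
    (hn : c * m ≤ n * r) : (m.choose n : ℝ) / (r : ℝ) ^ n ≤ (Real.exp 1 / c) ^ n :=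
  calc (m.choose n : ℝ) / (r : ℝ) ^ n ≤ (m : ℝ) ^ n / n ! / (r : ℝ) ^ n := by
        gcongr
        exact Nat.choose_le_pow_div n m
    _ = ((m : ℝ) / r) ^ n / n ! := by rw [div_pow, div_right_comm]
    _ ≤ (Real.exp 1 / c) ^ n := by
        refine pow_div_factorial_le_exp_one_div_pow (by positivity) hc ?_
        rwa [← mul_div_assoc, div_le_iff₀ (by positivity)]

lemma exp_one_div_pow_ceil_mul_log_le {c x : ℝ} (hc : Real.exp 2 ≤ c) (hx : 0 < x) (m : ℕ) :
    (Real.exp 1 / c) ^ ⌈m * Real.log x⌉₊ ≤ 1 / x ^ m := by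
  have hc0 : 0 < c := (Real.exp_pos 2).trans_le hc
  have base_le : Real.exp 1 / c ≤ Real.exp (-1) := by
    rw [div_le_iff₀ hc0]
    calc Real.exp 1 = Real.exp (-1) * Real.exp 2 := by rw [← Real.exp_add]; norm_num
      _ ≤ Real.exp (-1) * c := by gcongr
  calc (Real.exp 1 / c) ^ ⌈m * Real.log x⌉₊
      ≤ Real.exp (-1) ^ ⌈m * Real.log x⌉₊ := by gcongr
    _ = Real.exp (-⌈m * Real.log x⌉₊) := by rw [← Real.exp_nat_mul, mul_neg_one]
    _ ≤ Real.exp (-(m * Real.log x)) := by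
        gcongr
        exact Nat.le_ceil _
    _ = 1 / x ^ m := by rw [Real.exp_neg, Real.exp_nat_mul, Real.exp_log hx, one_div]

lemma exp_two_le_twelve : Real.exp 2 ≤ 12 :=
  calc Real.exp 2 = Real.exp 1 ^ 2 := by rw [Real.exp_one_pow, Nat.cast_ofNat]
    _ ≤ 3 ^ 2 := by gcongr; exact Real.exp_one_lt_three.le
    _ ≤ 12 := by norm_num

lemma two_pow_div_pow_twelve_le {k d : ℕ} (hk : 0 < k)
    (hd : (2 : ℝ) ^ (d - 1) ≤ k / Real.log k) :
    (2 : ℝ) ^ d / (k : ℝ) ^ 12 ≤ 2 / ((k : ℝ) ^ 3 * Real.log k) :=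
  have one_le_cast : (1 : ℝ) ≤ k := mod_cast hk
  have two_pow_le : (2 : ℝ) ^ d ≤ 2 * (k / Real.log k) :=
    calc (2 : ℝ) ^ d ≤ 2 ^ (d - 1 + 1) := by gcongr; exacts [one_le_two, le_tsub_add]
      _ = 2 * 2 ^ (d - 1) := pow_succ' _ _
      _ ≤ 2 * (k / Real.log k) := by gcongr
  calc (2 : ℝ) ^ d / (k : ℝ) ^ 12 ≤ 2 * (k / Real.log k) / (k : ℝ) ^ 4 := by
        gcongr
        norm_num
    _ = 2 / ((k : ℝ) ^ 3 * Real.log k) := by field_simp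

end Estimates

section MaximumLoad

variable {U V : Type*} [Fintype V] [DecidableEq V] {κ : ℕ} {H : Finset (U → V)} {S : Finset U}

/-- `κ`-wise independence of a finite family `H` of functions `U → V`: a uniformly chosen member
of `H` takes prescribed values at `κ` distinct keys with probability `|V|^(-κ)`. The probability
is cleared of denominators, so that the condition is an equation in `ℕ`. -/
def IsKWiseIndependent (κ : ℕ) (H : Finset (U → V)) : Prop :=
  ∀ x : Fin κ → U, Function.Injective x → ∀ a : Fin κ → V,
    #{h ∈ H | ∀ l, h (x l) = a l} * Fintype.card V ^ κ = #H

namespace IsKWiseIndependent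

lemma card_filter_forall_mem_eq (hH : IsKWiseIndependent κ H) {T : Finset U} (hT : #T = κ)
    (a : U → V) : #{h ∈ H | ∀ y ∈ T, h y = a y} * Fintype.card V ^ κ = #H := by
  let e := (T.equivFinOfCardEq hT).symm
  have forall_mem_iff (h : U → V) : (∀ y ∈ T, h y = a y) ↔ ∀ l, h (e l) = a (e l) := by
    rw [e.forall_congr_right (q := fun y : T ↦ h y = a y), Subtype.forall]
  simp only [forall_mem_iff]
  exact hH (fun l ↦ e l) (Subtype.val_injective.comp e.injective) fun l ↦ a (e l)

lemma card_filter_le_card_fiber_mul_le (hH : IsKWiseIndependent κ H) (v : V) :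
    #{h ∈ H | κ ≤ #{y ∈ S | h y = v}} * Fintype.card V ^ κ ≤ (#S).choose κ * #H := by
  classical
  have subset_biUnion : {h ∈ H | κ ≤ #{y ∈ S | h y = v}} ⊆
      (S.powersetCard κ).biUnion fun T ↦ {h ∈ H | ∀ y ∈ T, h y = v} := by
    intro h hh
    obtain ⟨hhH, hload⟩ := mem_filter.1 hh
    obtain ⟨T, hTfiber, hTcard⟩ := exists_subset_card_eq hload
    exact mem_biUnion.2 ⟨T, mem_powersetCard.2 ⟨hTfiber.trans (filter_subset _ _), hTcard⟩,
      mem_filter.2 ⟨hhH, fun y hy ↦ (mem_filter.1 (hTfiber hy)).2⟩⟩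
  calc #{h ∈ H | κ ≤ #{y ∈ S | h y = v}} * Fintype.card V ^ κ
      ≤ (∑ T ∈ S.powersetCard κ, #{h ∈ H | ∀ y ∈ T, h y = v}) * Fintype.card V ^ κ := by
        gcongr
        exact (card_le_card subset_biUnion).trans card_biUnion_le
    _ = ∑ _T ∈ S.powersetCard κ, #H := by
        rw [sum_mul]
        exact sum_congr rfl fun _ hT ↦
          hH.card_filter_forall_mem_eq (mem_powersetCard.1 hT).2 fun _ ↦ v
    _ = (#S).choose κ * #H := by rw [sum_const, card_powersetCard, smul_eq_mul]

lemma card_filter_le_card_fiber_le (hH : IsKWiseIndependent κ H) {c : ℝ} (hc : 0 < c)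
    (hκ : c * #S ≤ κ * Fintype.card V) (v : V) :
    (#{h ∈ H | κ ≤ #{y ∈ S | h y = v}} : ℝ) ≤ (Real.exp 1 / c) ^ κ * #H := by
  have hV : 0 < Fintype.card V := Fintype.card_pos_iff.2 ⟨v⟩
  have union_bound : (#{h ∈ H | κ ≤ #{y ∈ S | h y = v}} : ℝ) * (Fintype.card V : ℝ) ^ κ ≤
      (#S).choose κ * #H := mod_cast hH.card_filter_le_card_fiber_mul_le v
  calc (#{h ∈ H | κ ≤ #{y ∈ S | h y = v}} : ℝ)
      ≤ (#S).choose κ * #H / (Fintype.card V : ℝ) ^ κ := by rwa [le_div_iff₀ (by positivity)]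
    _ = (#S).choose κ / (Fintype.card V : ℝ) ^ κ * #H := mul_div_right_comm _ _ _
    _ ≤ (Real.exp 1 / c) ^ κ * #H := by
        gcongr
        exact choose_div_pow_le_exp_one_div_pow hc hV hκ

lemma card_filter_exists_le_card_fiber_le (hH : IsKWiseIndependent κ H) {c : ℝ} (hc : 0 < c)
    (hκ : c * #S ≤ κ * Fintype.card V) :
    (#{h ∈ H | ∃ v, κ ≤ #{y ∈ S | h y = v}} : ℝ) ≤
      Fintype.card V * ((Real.exp 1 / c) ^ κ * #H) := by
  classical
  have filter_exists_eq : {h ∈ H | ∃ v, κ ≤ #{y ∈ S | h y = v}} =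
      univ.biUnion fun v ↦ {h ∈ H | κ ≤ #{y ∈ S | h y = v}} := by
    ext h
    simp
  calc (#{h ∈ H | ∃ v, κ ≤ #{y ∈ S | h y = v}} : ℝ)
      ≤ ∑ v, (#{h ∈ H | κ ≤ #{y ∈ S | h y = v}} : ℝ) := by
        rw [filter_exists_eq]
        exact mod_cast card_biUnion_le
    _ ≤ ∑ _v : V, (Real.exp 1 / c) ^ κ * #H :=
        sum_le_sum fun v _ ↦ hH.card_filter_le_card_fiber_le hc hκ v
    _ = Fintype.card V * ((Real.exp 1 / c) ^ κ * #H) := by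
        rw [sum_const, card_univ, nsmul_eq_mul]

end IsKWiseIndependent

open Classical in
theorem stmt3_general {t : ℝ} (hS : 2 ≤ #S) (hV : #S / Real.log #S ≤ Fintype.card V)
    (hH : IsKWiseIndependent ⌈12 * Real.log #S⌉₊ H) (ht : 12 * Real.log #S ≤ t) :
    (#{f ∈ H | ∃ v, t ≤ #{y ∈ S | f y = v}} : ℝ) ≤ Fintype.card V / (#S : ℝ) ^ 12 * #H := by
  set κ := ⌈12 * Real.log #S⌉₊
  have hS_pos : (0 : ℝ) < #S := by positivity
  have hlog_pos : 0 < Real.log #S := Real.log_pos (mod_cast hS)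
  have hκ : 12 * (#S : ℝ) ≤ κ * Fintype.card V :=
    calc 12 * (#S : ℝ) ≤ 12 * (Fintype.card V * Real.log #S) := by
          gcongr
          exact (div_le_iff₀ hlog_pos).1 hV
      _ = 12 * Real.log #S * Fintype.card V := by ring
      _ ≤ κ * Fintype.card V := by gcongr; exact Nat.le_ceil _
  calc (#{f ∈ H | ∃ v, t ≤ #{y ∈ S | f y = v}} : ℝ)
      ≤ #{f ∈ H | ∃ v, κ ≤ #{y ∈ S | f y = v}} := by
        gcongr with f _
        exact fun hv ↦ Nat.ceil_le.2 (ht.trans hv)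
    _ ≤ Fintype.card V * ((Real.exp 1 / 12) ^ κ * #H) :=
        hH.card_filter_exists_le_card_fiber_le (by norm_num) hκ
    _ ≤ Fintype.card V * (1 / (#S : ℝ) ^ 12 * #H) := by
        gcongr
        exact mod_cast exp_one_div_pow_ceil_mul_log_le exp_two_le_twelve hS_pos 12
    _ = Fintype.card V / (#S : ℝ) ^ 12 * #H := by ring

end MaximumLoad

/- **Statement 3.** Let `U` be finite, `2 ≤ k ≤ |U|`, `d` the positive integer
with `2^(d-1) < k/ln k ≤ 2^d`, and `d1 = 2^d`.  Let `Hfam` be a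
`⌈12 ln k⌉`-wise independent family of functions `U → Fin d1`.  Then for every
`S ⊆ U` with `|S| = k`, for `f` chosen uniformly from `Hfam`, the probability
that some `j` has `|{y ∈ S : f y = j}| ≥ 13 ln k` is at most `2/(k³ ln k)`. -/
open Classical in
theorem stmt3 {U : Type*} [Fintype U] [DecidableEq U]
    (k : ℕ) (hk : 2 ≤ k) (hkU : k ≤ Fintype.card U)
    (d : ℕ) (hd : 0 < d)
    (hdlow : (2 : ℝ) ^ (d - 1) < (k : ℝ) / Real.log k)
    (hdhigh : (k : ℝ) / Real.log k ≤ (2 : ℝ) ^ d)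
    (d1 : ℕ) (hd1 : d1 = 2 ^ d)
    (Hfam : Finset (U → Fin d1)) (hHne : Hfam.Nonempty)
    (hHindep : ∀ x : Fin ⌈(12 : ℝ) * Real.log k⌉₊ → U, Function.Injective x →
      ∀ a : Fin ⌈(12 : ℝ) * Real.log k⌉₊ → Fin d1,
        (Hfam.filter (fun h => ∀ l, h (x l) = a l)).card *
            d1 ^ (⌈(12 : ℝ) * Real.log k⌉₊ : ℕ) = Hfam.card)
    (S : Finset U) (hS : S.card = k) :
    (((Hfam.filter (fun f => ∃ j : Fin d1,
        (13 : ℝ) * Real.log k ≤ ((S.filter (fun y => f y = j)).card : ℝ))).card : ℝ))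
      ≤ (2 / ((k : ℝ) ^ 3 * Real.log k)) * (Hfam.card : ℝ) := by
  subst hd1 hS
  have hH : IsKWiseIndependent ⌈12 * Real.log #S⌉₊ Hfam := fun x hx a ↦ by
    simpa only [Fintype.card_fin] using hHindep x hx a
  have card_eq : (Fintype.card (Fin (2 ^ d)) : ℝ) = 2 ^ d := by simp
  calc _ ≤ (Fintype.card (Fin (2 ^ d)) : ℝ) / (#S : ℝ) ^ 12 * #Hfam := by
        convert stmt3_general (t := 13 * Real.log #S) hk (card_eq ▸ hdhigh) hH
          (by gcongr; norm_num)
    _ ≤ 2 / ((#S : ℝ) ^ 3 * Real.log #S) * #Hfam :=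
        mul_le_mul_of_nonneg_right
          (card_eq ▸ two_pow_div_pow_twelve_le (by positivity) hdlow.le) (Nat.cast_nonneg _)
end

section
/- Let U be a finite set, k ≥ 2 an integer, r = ⌈13 ln k⌉², and m = ⌈8 ln k⌉. Let H' be a universal family of functions from U to {0,...,r-1}. Then for every subset S' ⊆ U with |S'| ≤ 13 ln k, the number of m-tuples (f_1, ..., f_m) ∈ (H')^m such that no component f_l is injective on S' is strictly less than |H'|^m / k⁴; equivalently, if f_1,...,f_m are chosen independently and uniformly at random from H', then with probability greater than 1 - 1/k⁴ at least one f_l is injective on S'. -/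
open Finset

/-
A function that is not injective on `S` collides on at least two ordered pairs of distinct points
of `S`, while by universality each such pair is a collision for at most a fraction `1/r` of the
family. So as soon as `#S * (#S - 1) ≤ r`, at most half of the family fails to be injective on `S`,
and at most a fraction `2⁻ᵐ` of the `m`-tuples fail in every component. Since `log 2 > 1/2`,
the choice `8 log k ≤ m` gives `k ^ 4 < 2 ^ m`.
-/

section

variable {α β : Type*}

/-- A universal family of functions `α → β`: any two distinct points collide under at most a
fraction `1/r` of the family. Here `r` plays the role of the number of values, but it is a free
parameter, not tied to `β`, and the inequality is cleared of its denominator. -/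
def IsUniversal [DecidableEq β] (H : Finset (α → β)) (r : ℕ) : Prop :=
  ∀ x y, x ≠ y → #{h ∈ H | h x = h y} * r ≤ #H

theorem two_le_card_collisions_of_not_injOn [DecidableEq β] {f : α → β} {S : Finset α}
    (hf : ¬ Set.InjOn f S) : 2 ≤ #{p ∈ S.offDiag | f p.1 = f p.2} := by
  obtain ⟨x, hx, y, hy, hfxy, hxy⟩ : ∃ x ∈ S, ∃ y ∈ S, f x = f y ∧ x ≠ y := by
    simpa [Set.InjOn] using hf
  refine one_lt_card.2 ⟨(x, y), ?_, (y, x), ?_, fun h ↦ hxy (Prod.mk.inj h).1⟩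
  · simp [hx, hy, hxy, hfxy]
  · simp [hx, hy, hxy.symm, hfxy]

theorem two_mul_card_not_injOn_le_sum [DecidableEq β] (H : Finset (α → β)) (S : Finset α) :
    2 * #{h ∈ H | ¬ Set.InjOn h S} ≤ ∑ p ∈ S.offDiag, #{h ∈ H | h p.1 = h p.2} :=
  calc 2 * #{h ∈ H | ¬ Set.InjOn h S}
      = ∑ h ∈ H with ¬ Set.InjOn h S, 2 := by rw [sum_const, smul_eq_mul, mul_comm]
    _ ≤ ∑ h ∈ H with ¬ Set.InjOn h S, #{p ∈ S.offDiag | h p.1 = h p.2} :=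
        sum_le_sum fun _ hh ↦ two_le_card_collisions_of_not_injOn (mem_filter.1 hh).2
    _ ≤ ∑ h ∈ H, #{p ∈ S.offDiag | h p.1 = h p.2} := sum_le_sum_of_subset (filter_subset _ _)
    _ = ∑ p ∈ S.offDiag, #{h ∈ H | h p.1 = h p.2} :=
        sum_card_bipartiteAbove_eq_sum_card_bipartiteBelow
          fun (h : α → β) (p : α × α) ↦ h p.1 = h p.2

namespace IsUniversal

variable [DecidableEq β] {H : Finset (α → β)} {S : Finset α} {r : ℕ}

theorem two_mul_card_not_injOn_mul_le (hH : IsUniversal H r) :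
    2 * #{h ∈ H | ¬ Set.InjOn h S} * r ≤ #S * (#S - 1) * #H :=
  calc 2 * #{h ∈ H | ¬ Set.InjOn h S} * r
      ≤ (∑ p ∈ S.offDiag, #{h ∈ H | h p.1 = h p.2}) * r := by
        gcongr; exact two_mul_card_not_injOn_le_sum H S
    _ = ∑ p ∈ S.offDiag, #{h ∈ H | h p.1 = h p.2} * r := sum_mul ..
    _ ≤ ∑ _p ∈ S.offDiag, #H := sum_le_sum fun p hp ↦ hH p.1 p.2 (mem_offDiag.1 hp).2.2
    _ = #S * (#S - 1) * #H := by
        rw [sum_const, smul_eq_mul, offDiag_card, Nat.mul_sub_one]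

theorem two_mul_card_not_injOn_le (hH : IsUniversal H r) (hS : #S * (#S - 1) ≤ r) :
    2 * #{h ∈ H | ¬ Set.InjOn h S} ≤ #H := by
  rcases r.eq_zero_or_pos with rfl | hr
  · have hS_one : #S ≤ 1 := by
      rcases Nat.mul_eq_zero.1 (Nat.le_zero.1 hS) with h | h <;> omega
    have hinj (h : α → β) : Set.InjOn h S := (card_le_one_iff_subsingleton.1 hS_one).injOn h
    simp [hinj]
  · refine Nat.le_of_mul_le_mul_right ?_ hr
    calc 2 * #{h ∈ H | ¬ Set.InjOn h S} * r
        ≤ #S * (#S - 1) * #H := hH.two_mul_card_not_injOn_mul_le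
      _ ≤ r * #H := by gcongr
      _ = #H * r := mul_comm ..

theorem card_forall_not_injOn_mul_two_pow_le (hH : IsUniversal H r) (hS : #S * (#S - 1) ≤ r)
    (m : ℕ) :
    #{F ∈ Fintype.piFinset fun _ : Fin m ↦ H | ∀ l, ¬ Set.InjOn (F l) S} * 2 ^ m ≤ #H ^ m := by
  have hpi : {F ∈ Fintype.piFinset fun _ : Fin m ↦ H | ∀ l, ¬ Set.InjOn (F l) S} =
      Fintype.piFinset fun _ ↦ {h ∈ H | ¬ Set.InjOn h S} := by
    ext F
    simp only [mem_filter, Fintype.mem_piFinset, forall_and]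
  rw [hpi, Fintype.card_piFinset_const, ← mul_pow, mul_comm]
  gcongr
  exact hH.two_mul_card_not_injOn_le hS

end IsUniversal

theorem lt_two_pow_of_two_mul_log_le {x : ℝ} {m : ℕ} (hx : 1 < x) (hm : 2 * Real.log x ≤ m) :
    x < 2 ^ m := by
  have hlog : 0 < Real.log x := Real.log_pos hx
  have hlog_two : 1 / 2 < Real.log 2 := by linarith [Real.log_two_gt_d9]
  have hmpos : (0 : ℝ) < m := by linarith
  rw [← Real.log_lt_log_iff (by positivity) (by positivity), Real.log_pow]
  calc Real.log x ≤ m * (1 / 2) := by linarith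
    _ < m * Real.log 2 := by gcongr

theorem stmt4_general [DecidableEq β] {k : ℝ} (hk : 1 < k) {r m : ℕ} (hm : 8 * Real.log k ≤ m)
    {H : Finset (α → β)} (hH_nonempty : H.Nonempty) (hH : IsUniversal H r) {S : Finset α}
    (hS : #S * (#S - 1) ≤ r) :
    (#{F ∈ Fintype.piFinset fun _ : Fin m ↦ H | ∀ l, ¬ Set.InjOn (F l) S} : ℝ) * k ^ 4 <
      (#H : ℝ) ^ m := by
  have hpow : k ^ 4 < 2 ^ m := by
    refine lt_two_pow_of_two_mul_log_le (one_lt_pow₀ hk four_ne_zero) ?_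
    rw [Real.log_pow]
    push_cast
    linarith
  set N := #{F ∈ Fintype.piFinset fun _ : Fin m ↦ H | ∀ l, ¬ Set.InjOn (F l) S}
  have hcount : (N : ℝ) * 2 ^ m ≤ (#H : ℝ) ^ m := by
    exact_mod_cast hH.card_forall_not_injOn_mul_two_pow_le hS m
  rcases N.eq_zero_or_pos with hN | hN
  · rw [hN, Nat.cast_zero, zero_mul]
    exact pow_pos (Nat.cast_pos.2 hH_nonempty.card_pos) m
  · exact (by gcongr : (N : ℝ) * k ^ 4 < N * 2 ^ m).trans_le hcount

end

/- **Statement 4.** Let `U` be finite, `k ≥ 2`, `r = ⌈13 ln k⌉²`,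
`m = ⌈8 ln k⌉`, and let `Hfam'` be a universal family of functions
`U → Fin r`.  Then for every `S' ⊆ U` with `|S'| ≤ 13 ln k`, the number of
`m`-tuples `(f_1, …, f_m) ∈ (Hfam')^m` in which no component is injective on
`S'` is strictly less than `|Hfam'|^m / k⁴`. -/
open Classical in
theorem stmt4 {U : Type*} [Fintype U] [DecidableEq U]
    (k : ℕ) (hk : 2 ≤ k)
    (r m : ℕ) (hr : r = ⌈(13 : ℝ) * Real.log k⌉₊ ^ 2)
    (hm : m = ⌈(8 : ℝ) * Real.log k⌉₊)
    (Hfam' : Finset (U → Fin r)) (hH'ne : Hfam'.Nonempty)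
    (hH'univ : ∀ x y : U, x ≠ y →
      (Hfam'.filter (fun h => h x = h y)).card * r ≤ Hfam'.card)
    (S' : Finset U) (hS' : (S'.card : ℝ) ≤ 13 * Real.log k) :
    (((Fintype.piFinset (fun _ : Fin m => Hfam')).filter
        (fun F : Fin m → U → Fin r =>
          ∀ l : Fin m, ¬ Set.InjOn (F l) ↑S')).card : ℝ) * (k : ℝ) ^ 4
      < (Hfam'.card : ℝ) ^ m := by
  have hS'_ceil : #S' ≤ ⌈13 * Real.log k⌉₊ := Nat.cast_le.1 (hS'.trans (Nat.le_ceil _))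
  exact stmt4_general (Nat.one_lt_cast.2 hk) (hm ▸ Nat.le_ceil _) hH'ne hH'univ
    (by rw [hr, sq]; gcongr; omega)
end

section
/- Let d1, d2, d3 be positive integers, U a finite set, f : U → {0,...,d1-1} a function, and for each j ∈ {0,...,d1-1} let F_j = (h_{j,1}, ..., h_{j,d2}) be a sequence of d2 functions from U to {0,...,d3-1}. Let S ⊆ U with |S| = k, and for j ∈ {0,...,d1-1} let S_j = { x ∈ S : f(x) = j }. Suppose that for every j ∈ {0,...,d1-1} there is an index η(j) ∈ {1,...,d2} such that h_{j,η(j)} is injective on S_j. Define B = { g(f(x), η(f(x)), x) : x ∈ S }. Then: (1) B has exactly k elements; (2) for every a ∈ B, |T_a ∩ S| = 1; (3) S ⊆ ∪_{a ∈ B} T_a; and (4) T_a ∩ T_b = ∅ for all distinct a, b ∈ B. -/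
open Finset

/-!
Let `p x = g (f x) (η (f x)) x`. A label `g j i x` determines `j` and `i`, so if `p x` is also a
label `g (f y) i y` of `y`, then `f x = f y` and `i = η (f x) = η (f y)`, that is, `p x = p y`.
Hence every `T a` with `a ∈ B` is the fibre `p ⁻¹' {a}`. Since `p` is injective on `S`, each of
these fibres meets `S` in exactly one point.
-/

theorem mul_add_fin_inj {n a b : ℕ} {r s : Fin n} :
    a * n + (r : ℕ) = b * n + s ↔ a = b ∧ r = s := by
  have : NeZero n := ⟨r.pos.ne'⟩
  exact (Nat.divModEquiv n).symm.injective.eq_iff.trans Prod.mk_inj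

theorem mixedRadix_inj {m n a b : ℕ} {q q' : Fin m} {r r' : Fin n} :
    a * m * n + q * n + r = b * m * n + q' * n + r' ↔ a = b ∧ q = q' ∧ r = r' := by
  rw [← add_mul, ← add_mul, mul_add_fin_inj, mul_add_fin_inj, and_assoc]

section Labels

variable {U J I A : Type*} {f : U → J} {g : J → I → U → A} {η : J → I}

/-- The set `T_a` of points carrying the label `a`, where the labels of `x` are `g (f x) i x` for
all indices `i`. -/
def labelClass (f : U → J) (g : J → I → U → A) (a : A) : Set U :=
  {x | ∃ i, a = g (f x) i x}

/-- The label of `x` at the index that `η` selects for the value `f x`; the set `B` consists of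
the selected labels of the points of `S`. -/
def selectedLabel (f : U → J) (g : J → I → U → A) (η : J → I) (x : U) : A :=
  g (f x) (η (f x)) x

theorem labelClass_eq_fiber (hJ : ∀ j i x j' i' y, g j i x = g j' i' y → j = j')
    (hI : ∀ j i x i' y, g j i x = g j i' y → i = i')
    {a : A} (ha : a ∈ Set.range (selectedLabel f g η)) :
    labelClass f g a = selectedLabel f g η ⁻¹' {a} := by
  obtain ⟨x, rfl⟩ := ha
  ext y
  constructor
  · rintro ⟨i, hxy⟩
    have hf : f x = f y := hJ _ _ _ _ _ _ hxy
    rw [selectedLabel, hf] at hxy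
    obtain rfl : η (f y) = i := hI _ _ _ _ _ hxy
    rw [Set.mem_preimage, Set.mem_singleton_iff, selectedLabel, selectedLabel, hf, hxy]
  · intro hy
    exact ⟨η (f y), hy.symm⟩

theorem injOn_selectedLabel {S : Set U} (hJ : ∀ j i x j' i' y, g j i x = g j' i' y → j = j')
    (hinj : ∀ j, Set.InjOn (g j (η j)) {x | x ∈ S ∧ f x = j}) :
    Set.InjOn (selectedLabel f g η) S := by
  intro x hx y hy hxy
  have hf : f x = f y := hJ _ _ _ _ _ _ hxy
  rw [selectedLabel, hf] at hxy
  exact hinj (f y) ⟨hx, hf⟩ ⟨hy, rfl⟩ hxy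

theorem stmt5_general {S : Set U} (hJ : ∀ j i x j' i' y, g j i x = g j' i' y → j = j')
    (hI : ∀ j i x i' y, g j i x = g j i' y → i = i')
    (hinj : ∀ j, Set.InjOn (g j (η j)) {x | x ∈ S ∧ f x = j}) :
    (selectedLabel f g η '' S).encard = S.encard ∧
    (∀ a ∈ selectedLabel f g η '' S, ∃! x, x ∈ S ∧ x ∈ labelClass f g a) ∧
    (∀ x ∈ S, ∃ a ∈ selectedLabel f g η '' S, x ∈ labelClass f g a) ∧
    (selectedLabel f g η '' S).PairwiseDisjoint (labelClass f g) := by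
  have hp : Set.InjOn (selectedLabel f g η) S := injOn_selectedLabel hJ hinj
  have hfiber : ∀ a ∈ selectedLabel f g η '' S,
      labelClass f g a = selectedLabel f g η ⁻¹' {a} :=
    fun a ha ↦ labelClass_eq_fiber hJ hI (Set.image_subset_range _ _ ha)
  refine ⟨hp.encard_image, ?_, ?_, ?_⟩
  · intro a ha
    rw [hfiber a ha]
    obtain ⟨x, hx, rfl⟩ := ha
    exact ⟨x, ⟨hx, rfl⟩, fun y ⟨hy, hyx⟩ ↦ hp hy hx hyx⟩
  · exact fun x hx ↦ ⟨_, Set.mem_image_of_mem _ hx, η (f x), rfl⟩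
  · exact (Set.pairwiseDisjoint_fiber _ _).mono_on fun a ha ↦ (hfiber a ha).le

end Labels

/- **Statement 5.** Let `d1, d2, d3` be positive, `U` finite,
`f : U → Fin d1`, and `h j i : U → Fin d3` for `j : Fin d1`, `i : Fin d2`.
Let `S ⊆ U` with `|S| = k`, `S_j = {x ∈ S : f x = j}`, and suppose that for
every `j` there is an index `η j` such that `h j (η j)` is injective on `S_j`.
With `g j i x = j·d2·d3 + i·d3 + h j i x`, `T a = {x | ∃ i, a = g (f x) i x}`
and `B = { g (f x) (η (f x)) x : x ∈ S }`: `B` has exactly `k` elements, each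
`T a` (`a ∈ B`) meets `S` in exactly one element, `S ⊆ ⋃_{a ∈ B} T a`, and the
`T a` for `a ∈ B` are pairwise disjoint. -/
theorem stmt5 (d1 d2 d3 : ℕ) (hd1 : 0 < d1) (hd2 : 0 < d2) (hd3 : 0 < d3)
    {U : Type*} [Fintype U] [DecidableEq U]
    (f : U → Fin d1) (h : Fin d1 → Fin d2 → U → Fin d3)
    (k : ℕ) (S : Finset U) (hS : S.card = k)
    (η : Fin d1 → Fin d2)
    (hinj : ∀ j : Fin d1, Set.InjOn (h j (η j)) {x : U | x ∈ S ∧ f x = j})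
    (g : Fin d1 → Fin d2 → U → ℕ)
    (hg : ∀ (j : Fin d1) (i : Fin d2) (x : U),
      g j i x = (j : ℕ) * d2 * d3 + (i : ℕ) * d3 + (h j i x : ℕ))
    (T : ℕ → Set U)
    (hT : ∀ a : ℕ, T a = {x : U | ∃ i : Fin d2, a = g (f x) i x})
    (B : Finset ℕ) (hB : B = S.image (fun x => g (f x) (η (f x)) x)) :
    B.card = k ∧
    (∀ a ∈ B, ∃! x : U, x ∈ S ∧ x ∈ T a) ∧
    (∀ x ∈ S, ∃ a ∈ B, x ∈ T a) ∧
    (∀ a ∈ B, ∀ b ∈ B, a ≠ b → T a ∩ T b = ∅) := by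
  obtain ⟨rfl, rfl⟩ : T = labelClass f g ∧ B = S.image (selectedLabel f g η) := ⟨funext hT, hB⟩
  simpa [← Finset.coe_image, Set.encard_coe_eq_coe_finsetCard, hS, Set.PairwiseDisjoint,
    Set.Pairwise, Function.onFun, Set.disjoint_iff_inter_eq_empty] using
    stmt5_general (f := f) (g := g) (η := η) (S := S)
      (by simp +contextual [hg, mixedRadix_inj, Fin.val_inj])
      (by simp +contextual [hg, mixedRadix_inj])
      (by simpa [Set.InjOn, hg, Fin.val_inj] using hinj)
end

section
/- Let G be a simple graph on vertex set V = {0,...,n-1} with edge weights wt : E(G) → ℝ≥0, let k ≥ 1, let f : V → {0,...,4k²-1}, and let H be a subgraph of G. Then Compact(H,f) has a nice k-matching (with respect to f) if and only if Red-Com(H,f) has a nice k-matching. Moreover, if Compact(H,f) (and hence Red-Com(H,f)) has a nice k-matching, then the maximum weight of a nice k-matching in Compact(H,f) equals the maximum weight of a nice k-matching in Red-Com(H,f). -/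
open Finset
open Classical

/-- An edge is a pair `(u, v)` of vertices with `u < v`.  A set `M` of edges
is a matching if no two distinct edges of `M` share an endpoint. -/
def IsMatchingE (M : Finset (ℕ × ℕ)) : Prop :=
  ∀ e ∈ M, ∀ e' ∈ M, e ≠ e' →
    e.1 ≠ e'.1 ∧ e.1 ≠ e'.2 ∧ e.2 ≠ e'.1 ∧ e.2 ≠ e'.2

/-- `M` is a `k`-matching of the graph with edge set `H`. -/
def IsKMatchingE (H M : Finset (ℕ × ℕ)) (k : ℕ) : Prop :=
  M ⊆ H ∧ M.card = k ∧ IsMatchingE M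

/-- The weight of a set of edges. -/
noncomputable def mweight (wt : ℕ × ℕ → ℝ) (M : Finset (ℕ × ℕ)) : ℝ :=
  ∑ e ∈ M, wt e

/-- The set of vertices covered by a set of edges. -/
def coveredE (M : Finset (ℕ × ℕ)) : Set ℕ := {v | ∃ e ∈ M, v = e.1 ∨ v = e.2}

/-- A matching is nice w.r.t. `f` if no two covered vertices lie in the same
part (preimage of a value of `f`). -/
def NiceE (f : ℕ → ℕ) (M : Finset (ℕ × ℕ)) : Prop := Set.InjOn f (coveredE M)

/-- The strict order `≺` on edges: `e ≺ e'` iff `β e = (wt e, e.1, e.2)` is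
lexicographically smaller than `β e'`. -/
def edgeLT (wt : ℕ × ℕ → ℝ) (e e' : ℕ × ℕ) : Prop :=
  wt e < wt e' ∨ (wt e = wt e' ∧ (e.1 < e'.1 ∨ (e.1 = e'.1 ∧ e.2 < e'.2)))

/-- `CompactG wt f H` : the subgraph of `H` consisting of every edge whose
endpoints lie in distinct parts of `f` and whose `β`-value is maximum among
the edges of `H` between those two parts. -/
noncomputable def CompactG (wt : ℕ × ℕ → ℝ) (f : ℕ → ℕ)
    (H : Finset (ℕ × ℕ)) : Finset (ℕ × ℕ) :=
  H.filter (fun e => f e.1 ≠ f e.2 ∧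
    ∀ e' ∈ H, ({f e'.1, f e'.2} : Finset ℕ) = {f e.1, f e.2} → ¬ edgeLT wt e e')

/-- `RedComG wt f k H` : from `CompactG wt f H` keep each edge that is among
the `8k` `β`-heaviest edges incident to (vertices of) the part of each of its
endpoints, and then keep only the `q = k(16k-1)` `β`-heaviest of those. -/
noncomputable def RedComG (wt : ℕ × ℕ → ℝ) (f : ℕ → ℕ) (k : ℕ)
    (H : Finset (ℕ × ℕ)) : Finset (ℕ × ℕ) :=
  let C := CompactG wt f H
  let R1 := C.filter (fun e =>
    (C.filter (fun e' => (f e'.1 = f e.1 ∨ f e'.2 = f e.1) ∧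
      edgeLT wt e e')).card < 8 * k ∧
    (C.filter (fun e' => (f e'.1 = f e.2 ∨ f e'.2 = f e.2) ∧
      edgeLT wt e e')).card < 8 * k)
  R1.filter (fun e => (R1.filter (fun e' => edgeLT wt e e')).card < k * (16 * k - 1))

/-!
Since `CompactG wt f H` has at most one edge between any two parts, it is a simple graph on the set
of parts, and its nice matchings are the matchings of that graph. Suppose such a `k`-matching uses
an edge `e` outside `RedComG wt f k H`, and let `B` be the set of at most `2(k - 1)` parts met by
its other edges.

* If `e` was discarded in step (1), then `8k` heavier edges share an end with `e`. Each part of `B`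
  lies on at most one of them, so one of them avoids `B`.
* If `e` was discarded in step (2), then `k(16k - 1)` heavier edges survived step (1). Each part of
  `B` lies on at most `8k` of them, and `2(k - 1) * 8k < k(16k - 1)`, so one of them avoids `B`.

Either way `e` can be exchanged for a heavier edge. Exchanges never lower the weight and strictly
increase an edge in the order `β`, so they come to an end, necessarily inside `RedComG wt f k H`.
The same exchange works in any linear hypergraph with edges of bounded size.
-/

section Heaviest

variable {α γ : Type*} [LinearOrder γ] {key : α → γ} {S : Finset α} {m : ℕ} {a b : α}

/-- The `m` elements of `S` with the largest keys, or all of `S` if there are fewer than `m`. It is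
encoded, for a `key` injective on `S`, by counting the elements that beat a given one; on ties it
may be larger. -/
def heaviest (key : α → γ) (m : ℕ) (S : Finset α) : Finset α :=
  {a ∈ S | #{x ∈ S | key a < key x} < m}

lemma heaviest_subset : heaviest key m S ⊆ S :=
  filter_subset _ _

lemma le_card_of_notMem_heaviest (ha : a ∈ S) (ha' : a ∉ heaviest key m S) :
    m ≤ #{x ∈ S | key a < key x} := by
  simpa only [heaviest, mem_filter, ha, true_and, not_lt] using ha'

lemma card_heaviest_le (hkey : Set.InjOn key S) : #(heaviest key m S) ≤ m := by
  rcases (heaviest key m S).eq_empty_or_nonempty with hT | hT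
  · simp only [hT, card_empty, zero_le]
  obtain ⟨a, ha, hmin⟩ := exists_min_image _ key hT
  have herase : (heaviest key m S).erase a ⊆ {x ∈ S | key a < key x} := fun x hx ↦ by
    obtain ⟨hne, hx⟩ := mem_erase.1 hx
    have hxa : key a ≠ key x := hkey.ne (heaviest_subset ha) (heaviest_subset hx) hne.symm
    exact mem_filter.2 ⟨heaviest_subset hx, (hmin x hx).lt_of_ne hxa⟩
  calc #(heaviest key m S) = #((heaviest key m S).erase a) + 1 := (card_erase_add_one ha).symm
    _ ≤ #{x ∈ S | key a < key x} + 1 := Nat.succ_le_succ (card_le_card herase)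
    _ ≤ m := (mem_filter.1 ha).2

lemma card_filter_key_lt_lt (hb : b ∈ S) (hab : key a < key b) :
    #{x ∈ S | key b < key x} < #{x ∈ S | key a < key x} := by
  have hsub : {x ∈ S | key b < key x} ⊆ {x ∈ S | key a < key x} :=
    monotone_filter_right S fun _ _ ↦ hab.trans
  refine card_lt_card ((ssubset_iff_of_subset hsub).2 ⟨b, mem_filter.2 ⟨hb, hab⟩, ?_⟩)
  simp only [mem_filter, lt_irrefl, and_false, not_false_eq_true]

end Heaviest

section Hypergraph

variable {α ι γ : Type*} [LinearOrder γ] {key : α → γ} {ends : α → Finset ι}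
  {C S M : Finset α} {B : Finset ι} {e e' : α} {p : ι} {d m q r : ℕ}

lemma exists_disjoint_of_card_mul_lt (hdeg : ∀ b ∈ B, #{e ∈ S | b ∈ ends e} ≤ m)
    (hlt : #B * m < #S) : ∃ e ∈ S, Disjoint (ends e) B := by
  by_contra! hcon
  have hcover : S ⊆ B.biUnion fun b ↦ {e ∈ S | b ∈ ends e} := fun e he ↦ by
    obtain ⟨b, hbe, hbB⟩ := not_disjoint_iff.1 (hcon e he)
    exact mem_biUnion.2 ⟨b, hbB, mem_filter.2 ⟨he, hbe⟩⟩
  exact hlt.not_ge ((card_le_card hcover).trans (card_biUnion_le_card_mul _ _ _ hdeg))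

/-- `C` is a linear hypergraph: two distinct edges share at most one vertex. A simple graph is the
case in which every edge has exactly two ends. -/
def IsLinearHypergraph (ends : α → Finset ι) (C : Finset α) : Prop :=
  (C : Set α).Pairwise fun e e' ↦ #(ends e ∩ ends e') ≤ 1

lemma isLinearHypergraph_of_card_eq_two (hcard : ∀ e ∈ C, #(ends e) = 2)
    (hinj : Set.InjOn ends C) : IsLinearHypergraph ends C := by
  refine fun e he e' he' hne ↦ Nat.le_of_lt_succ (lt_of_not_ge fun hge ↦ hne (hinj he he' ?_))
  have hleft : ends e ∩ ends e' = ends e :=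
    eq_of_subset_of_card_le inter_subset_left ((hcard e he).trans_le hge)
  have hright : ends e ∩ ends e' = ends e' :=
    eq_of_subset_of_card_le inter_subset_right ((hcard e' he').trans_le hge)
  exact hleft.symm.trans hright

lemma IsLinearHypergraph.card_filter_mem_le_one (hC : IsLinearHypergraph ends C)
    (hS : S ⊆ C) (hSp : ∀ e ∈ S, p ∈ ends e) {b : ι} (hb : b ≠ p) :
    #{e ∈ S | b ∈ ends e} ≤ 1 := by
  refine card_le_one.2 fun e he e' he' ↦ ?_
  rw [mem_filter] at he he'
  by_contra hne
  exact hb (card_le_one.1 (hC (hS he.1) (hS he'.1) hne)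
    b (mem_inter.2 ⟨he.2, he'.2⟩) p (mem_inter.2 ⟨hSp e he.1, hSp e' he'.1⟩))

/-- The edges of `C` that are among the `d` heaviest edges at each of their ends. -/
noncomputable def locallyHeaviest (key : α → γ) (ends : α → Finset ι) (d : ℕ) (C : Finset α) :
    Finset α :=
  {e ∈ C | ∀ p ∈ ends e, e ∈ heaviest key d {x ∈ C | p ∈ ends x}}

/-- The two-step reduction of the paper for a hypergraph `C`, with `d` edges kept per vertex and
`q` edges kept in total; `RedComG` is the case of graphs on the parts, `d = 8k`,
`q = k(16k-1)`. -/
noncomputable def reducedEdges (key : α → γ) (ends : α → Finset ι) (d q : ℕ) (C : Finset α) :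
    Finset α :=
  heaviest key q (locallyHeaviest key ends d C)

lemma locallyHeaviest_subset : locallyHeaviest key ends d C ⊆ C :=
  filter_subset _ _

lemma reducedEdges_subset : reducedEdges key ends d q C ⊆ C :=
  heaviest_subset.trans locallyHeaviest_subset

lemma card_filter_locallyHeaviest_le (hkey : Set.InjOn key C) (p : ι) :
    #{e ∈ locallyHeaviest key ends d C | p ∈ ends e} ≤ d := by
  have hsub : {e ∈ locallyHeaviest key ends d C | p ∈ ends e} ⊆
      heaviest key d {x ∈ C | p ∈ ends x} := fun e he ↦ by
    obtain ⟨he, hp⟩ := mem_filter.1 he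
    exact (mem_filter.1 he).2 p hp
  exact (card_le_card hsub).trans (card_heaviest_le (hkey.mono (filter_subset _ _)))

lemma IsLinearHypergraph.exists_heavier_of_notMem_locallyHeaviest (hC : IsLinearHypergraph ends C)
    (he : e ∈ C) (he' : e ∉ locallyHeaviest key ends d C) (heB : Disjoint (ends e) B)
    (hd : #B < d) : ∃ e' ∈ C, key e < key e' ∧ Disjoint (ends e') B := by
  obtain ⟨p, hp, hep⟩ : ∃ p ∈ ends e, e ∉ heaviest key d {x ∈ C | p ∈ ends x} := by
    simpa only [locallyHeaviest, mem_filter, he, true_and, not_forall, exists_prop] using he'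
  set S := {x ∈ {x ∈ C | p ∈ ends x} | key e < key x}
  have hcard : d ≤ #S := le_card_of_notMem_heaviest (mem_filter.2 ⟨he, hp⟩) hep
  have hSC : S ⊆ C := (filter_subset _ _).trans (filter_subset _ _)
  have hSp : ∀ x ∈ S, p ∈ ends x := fun x hx ↦ (mem_filter.1 (mem_filter.1 hx).1).2
  have hne : ∀ b ∈ B, b ≠ p := fun b hb ↦ (disjoint_left.1 heB hp <| · ▸ hb)
  obtain ⟨x, hx, hxB⟩ := exists_disjoint_of_card_mul_lt
    (fun b hb ↦ hC.card_filter_mem_le_one hSC hSp (hne b hb)) (by omega)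
  exact ⟨x, hSC hx, (mem_filter.1 hx).2, hxB⟩

lemma exists_heavier_of_mem_locallyHeaviest (hkey : Set.InjOn key C)
    (he : e ∈ locallyHeaviest key ends d C) (he' : e ∉ reducedEdges key ends d q C)
    (hq : #B * d < q) : ∃ e' ∈ C, key e < key e' ∧ Disjoint (ends e') B := by
  have hdeg : ∀ b ∈ B,
      #{x ∈ {x ∈ locallyHeaviest key ends d C | key e < key x} | b ∈ ends x} ≤ d := fun b _ ↦
    (card_le_card (filter_subset_filter _ (filter_subset _ _))).trans
      (card_filter_locallyHeaviest_le hkey b)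
  obtain ⟨x, hx, hxB⟩ :=
    exists_disjoint_of_card_mul_lt hdeg (hq.trans_le (le_card_of_notMem_heaviest he he'))
  obtain ⟨hx, hlt⟩ := mem_filter.1 hx
  exact ⟨x, locallyHeaviest_subset hx, hlt, hxB⟩

lemma IsLinearHypergraph.exists_heavier_of_notMem_reducedEdges (hC : IsLinearHypergraph ends C)
    (hkey : Set.InjOn key C) (he : e ∈ C) (he' : e ∉ reducedEdges key ends d q C)
    (heB : Disjoint (ends e) B) (hd : #B < d) (hq : #B * d < q) :
    ∃ e' ∈ C, key e < key e' ∧ Disjoint (ends e') B := by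
  by_cases hloc : e ∈ locallyHeaviest key ends d C
  · exact exists_heavier_of_mem_locallyHeaviest hkey hloc he' hq
  · exact hC.exists_heavier_of_notMem_locallyHeaviest he hloc heB hd

lemma pairwiseDisjoint_insert_of_disjoint_biUnion (hM : (M : Set α).PairwiseDisjoint ends)
    (he : Disjoint (ends e) (M.biUnion ends)) : (insert e M : Set α).PairwiseDisjoint ends :=
  hM.insert fun x hx _ ↦ (disjoint_biUnion_right _ _ _).1 he x hx

-- The bounds matter at `j = #M - 1`; ranging over `j < #M` makes them vacuous for `M = ∅`.
lemma IsLinearHypergraph.exists_exchange (hC : IsLinearHypergraph ends C)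
    (hkey : Set.InjOn key C) (hne : ∀ e ∈ C, (ends e).Nonempty) (hr : ∀ e ∈ C, #(ends e) ≤ r)
    (hd : ∀ j < #M, r * j < d) (hq : ∀ j < #M, r * j * d < q)
    (hMC : M ⊆ C) (hM : (M : Set α).PairwiseDisjoint ends) (he : e ∈ M)
    (he' : e ∉ reducedEdges key ends d q C) :
    ∃ e' ∈ C, key e < key e' ∧ e' ∉ M.erase e ∧
      (insert e' (M.erase e) : Set α).PairwiseDisjoint ends := by
  set B := (M.erase e).biUnion ends
  have hBcard : #B ≤ r * #(M.erase e) :=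
    card_biUnion_le_card_mul _ _ _ (fun x hx ↦ hr x (hMC (mem_of_mem_erase hx))) |>.trans_eq
      (Nat.mul_comm _ _)
  have hj : #(M.erase e) < #M := card_erase_lt_of_mem he
  have heB : Disjoint (ends e) B := (disjoint_biUnion_right _ _ _).2 fun x hx ↦
    hM he (mem_of_mem_erase hx) (ne_of_mem_erase hx).symm
  obtain ⟨x, hxC, hlt, hxB⟩ := hC.exists_heavier_of_notMem_reducedEdges hkey (hMC he) he' heB
    (hBcard.trans_lt (hd _ hj)) ((Nat.mul_le_mul_right d hBcard).trans_lt (hq _ hj))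
  have herase : (M.erase e : Set α).PairwiseDisjoint ends :=
    hM.subset (coe_subset.2 (erase_subset e M))
  refine ⟨x, hxC, hlt, fun hx ↦ ?_, pairwiseDisjoint_insert_of_disjoint_biUnion herase hxB⟩
  exact (hne x hxC).ne_empty (disjoint_self.1 (hxB.mono_right (subset_biUnion_of_mem ends hx)))

theorem IsLinearHypergraph.exists_subset_reducedEdges {R : Type*} [AddCommMonoid R] [Preorder R]
    [IsOrderedAddMonoid R] {w : γ → R} (hw : Monotone w) (hC : IsLinearHypergraph ends C)
    (hkey : Set.InjOn key C) (hne : ∀ e ∈ C, (ends e).Nonempty) (hr : ∀ e ∈ C, #(ends e) ≤ r)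
    (hd : ∀ j < #M, r * j < d) (hq : ∀ j < #M, r * j * d < q)
    (hMC : M ⊆ C) (hM : (M : Set α).PairwiseDisjoint ends) :
    ∃ M' ⊆ reducedEdges key ends d q C, #M' = #M ∧ (M' : Set α).PairwiseDisjoint ends ∧
      ∑ e ∈ M, w (key e) ≤ ∑ e ∈ M', w (key e) := by
  -- Each exchange lowers the number of pairs of an edge of `M` and a heavier edge of `C`.
  induction hN : ∑ e ∈ M, #{x ∈ C | key e < key x} using Nat.strong_induction_on
    generalizing M with
  | h N ih =>
    by_cases hred : M ⊆ reducedEdges key ends d q C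
    · exact ⟨M, hred, rfl, hM, le_rfl⟩
    obtain ⟨e, he, heR⟩ := not_subset.1 hred
    obtain ⟨e', heC', hlt, he', hM'⟩ := hC.exists_exchange hkey hne hr hd hq hMC hM he heR
    have hcard : #(insert e' (M.erase e)) = #M := by
      rw [card_insert_of_notMem he', card_erase_add_one he]
    have hdrop : ∑ x ∈ insert e' (M.erase e), #{y ∈ C | key x < key y} < N := by
      rw [← hN, sum_insert he', ← add_sum_erase M _ he]
      exact Nat.add_lt_add_right (card_filter_key_lt_lt heC' hlt) _
    have hgain : ∑ x ∈ M, w (key x) ≤ ∑ x ∈ insert e' (M.erase e), w (key x) := by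
      rw [sum_insert he', ← add_sum_erase M _ he]
      exact add_le_add_left (hw hlt.le) _
    obtain ⟨M'', hsub, hcard'', hM'', hle⟩ := ih _ hdrop (hcard ▸ hd) (hcard ▸ hq)
      (insert_subset heC' ((erase_subset e M).trans hMC)) (by rwa [coe_insert]) rfl
    exact ⟨M'', hsub, hcard''.trans hcard, hM'', hgain.trans hle⟩

end Hypergraph

section Graph

variable {wt : ℕ × ℕ → ℝ} {f : ℕ → ℕ} {k : ℕ} {e e' : ℕ × ℕ} {G H M : Finset (ℕ × ℕ)}

/-- The key `β(e) = (wt e, e.1, e.2)` of the paper, in the lexicographic order. -/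
def edgeKey (wt : ℕ × ℕ → ℝ) (e : ℕ × ℕ) : ℝ ×ₗ ℕ ×ₗ ℕ :=
  toLex (wt e, toLex e)

lemma edgeKey_injective : Function.Injective (edgeKey wt) := fun _ _ h ↦
  toLex.injective (Prod.mk.inj (toLex.injective h)).2

lemma edgeLT_iff_edgeKey_lt : edgeLT wt e e' ↔ edgeKey wt e < edgeKey wt e' := by
  simp only [edgeLT, edgeKey, Prod.Lex.toLex_lt_toLex]

/-- The pair of parts joined by the edge `e`: its ends in the quotient graph, whose vertices are
the parts of `f`. -/
def partPair (f : ℕ → ℕ) (e : ℕ × ℕ) : Finset ℕ :=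
  {f e.1, f e.2}

lemma mem_partPair {p : ℕ} : p ∈ partPair f e ↔ f e.1 = p ∨ f e.2 = p := by
  simp only [partPair, mem_insert, mem_singleton, eq_comm]

lemma card_partPair_of_mem_compactG (he : e ∈ CompactG wt f H) : #(partPair f e) = 2 :=
  card_pair (mem_filter.1 he).2.1

lemma injOn_partPair_compactG : Set.InjOn (partPair f) (CompactG wt f H) := by
  intro e he e' he' h
  obtain ⟨heH, -, hmax⟩ := mem_filter.1 he
  obtain ⟨heH', -, hmax'⟩ := mem_filter.1 he'
  rw [← edgeKey_injective.eq_iff (f := edgeKey wt)]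
  exact le_antisymm (not_lt.1 fun hlt ↦ hmax' e heH h (edgeLT_iff_edgeKey_lt.2 hlt))
    (not_lt.1 fun hlt ↦ hmax e' heH' h.symm (edgeLT_iff_edgeKey_lt.2 hlt))

lemma isLinearHypergraph_compactG : IsLinearHypergraph (partPair f) (CompactG wt f H) :=
  isLinearHypergraph_of_card_eq_two (fun _ ↦ card_partPair_of_mem_compactG)
    injOn_partPair_compactG

lemma redComG_eq_reducedEdges : RedComG wt f k H =
    reducedEdges (edgeKey wt) (partPair f) (8 * k) (k * (16 * k - 1)) (CompactG wt f H) := by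
  have hloc : {e ∈ CompactG wt f H |
      #{e' ∈ CompactG wt f H | (f e'.1 = f e.1 ∨ f e'.2 = f e.1) ∧ edgeLT wt e e'} < 8 * k ∧
      #{e' ∈ CompactG wt f H | (f e'.1 = f e.2 ∨ f e'.2 = f e.2) ∧ edgeLT wt e e'} < 8 * k} =
      locallyHeaviest (edgeKey wt) (partPair f) (8 * k) (CompactG wt f H) := by
    ext e
    simp +contextual [locallyHeaviest, heaviest, mem_partPair, edgeLT_iff_edgeKey_lt,
      filter_filter, or_imp, forall_and]
  simp only [RedComG, hloc]
  simp only [reducedEdges, heaviest, edgeLT_iff_edgeKey_lt]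

lemma redComG_subset_compactG : RedComG wt f k H ⊆ CompactG wt f H :=
  redComG_eq_reducedEdges.trans_subset reducedEdges_subset

lemma pairwiseDisjoint_partPair (hM : IsMatchingE M) (hf : NiceE f M) :
    (M : Set (ℕ × ℕ)).PairwiseDisjoint (partPair f) := by
  intro e he e' he' hne
  obtain ⟨h₁₁, h₁₂, h₂₁, h₂₂⟩ := hM e he e' he' hne
  have hf' {u v : ℕ} (hu : u = e.1 ∨ u = e.2) (hv : v = e'.1 ∨ v = e'.2) (huv : u ≠ v) :
      f u ≠ f v :=
    hf.ne ⟨e, he, hu⟩ ⟨e', he', hv⟩ huv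
  simp only [Function.onFun, partPair, disjoint_insert_left, disjoint_singleton_left, mem_insert,
    mem_singleton, not_or]
  exact ⟨⟨hf' (.inl rfl) (.inl rfl) h₁₁, hf' (.inl rfl) (.inr rfl) h₁₂⟩,
    hf' (.inr rfl) (.inl rfl) h₂₁, hf' (.inr rfl) (.inr rfl) h₂₂⟩

lemma isMatchingE_of_pairwiseDisjoint (hM : (M : Set (ℕ × ℕ)).PairwiseDisjoint (partPair f)) :
    IsMatchingE M := by
  intro e he e' he' hne
  have hdisj : ∀ p ∈ partPair f e, p ∉ partPair f e' := disjoint_left.1 (hM he he' hne)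
  refine ⟨fun h ↦ ?_, fun h ↦ ?_, fun h ↦ ?_, fun h ↦ ?_⟩ <;> simp [partPair, h] at hdisj

lemma niceE_of_pairwiseDisjoint (hM : (M : Set (ℕ × ℕ)).PairwiseDisjoint (partPair f))
    (hf : ∀ e ∈ M, f e.1 ≠ f e.2) : NiceE f M := by
  rintro u ⟨e, he, hu⟩ v ⟨e', he', hv⟩ huv
  have hue : f u ∈ partPair f e := by rcases hu with rfl | rfl <;> simp [partPair]
  have hve : f v ∈ partPair f e' := by rcases hv with rfl | rfl <;> simp [partPair]
  obtain rfl : e = e' := hM.elim_finset he he' (f u) hue (huv ▸ hve)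
  have hend := hf e he
  rcases hu with rfl | rfl <;> rcases hv with rfl | rfl <;> simp_all

lemma exists_redComG_mweight_le (hM : IsKMatchingE (CompactG wt f H) M k) (hf : NiceE f M) :
    ∃ M', IsKMatchingE (RedComG wt f k H) M' k ∧ NiceE f M' ∧ mweight wt M ≤ mweight wt M' := by
  obtain ⟨hMC, hMk, hM⟩ := hM
  have hend : ∀ e ∈ CompactG wt f H, #(partPair f e) = 2 := fun _ ↦ card_partPair_of_mem_compactG
  have hd : ∀ j < #M, 2 * j < 8 * k := fun j hj ↦ by omega
  have hq : ∀ j < #M, 2 * j * (8 * k) < k * (16 * k - 1) := fun j hj ↦ by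
    calc 2 * j * (8 * k) = k * (16 * j) := by ring
      _ < k * (16 * k - 1) := Nat.mul_lt_mul_of_pos_left (by omega) (by omega)
  obtain ⟨M', hM'R, hcard, hM', hle⟩ := isLinearHypergraph_compactG.exists_subset_reducedEdges
    (w := fun x ↦ (ofLex x).1) Prod.Lex.monotone_fst_ofLex edgeKey_injective.injOn
    (fun e he ↦ card_pos.1 (by simp only [hend e he, Nat.ofNat_pos])) (fun e he ↦ (hend e he).le)
    hd hq hMC (pairwiseDisjoint_partPair hM hf)
  rw [← redComG_eq_reducedEdges] at hM'R
  exact ⟨M', ⟨hM'R, hcard.trans hMk, isMatchingE_of_pairwiseDisjoint hM'⟩,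
    niceE_of_pairwiseDisjoint hM' fun e he ↦
      (mem_filter.1 (redComG_subset_compactG (hM'R he))).2.1, hle⟩

lemma IsKMatchingE.mono (hM : IsKMatchingE G M k) (hGH : G ⊆ H) : IsKMatchingE H M k :=
  hM.imp_left (·.trans hGH)

lemma exists_niceE_compactG_iff_redComG :
    (∃ M, IsKMatchingE (CompactG wt f H) M k ∧ NiceE f M) ↔
      ∃ M, IsKMatchingE (RedComG wt f k H) M k ∧ NiceE f M :=
  ⟨fun ⟨_, hM, hf⟩ ↦ (exists_redComG_mweight_le hM hf).imp fun _ h ↦ ⟨h.1, h.2.1⟩,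
    fun ⟨M, hM, hf⟩ ↦ ⟨M, hM.mono redComG_subset_compactG, hf⟩⟩

lemma exists_mweight_max (hG : ∃ M, IsKMatchingE G M k ∧ NiceE f M) :
    ∃ M, (IsKMatchingE G M k ∧ NiceE f M) ∧
      ∀ M', IsKMatchingE G M' k → NiceE f M' → mweight wt M' ≤ mweight wt M := by
  have hfin : {M | IsKMatchingE G M k ∧ NiceE f M}.Finite :=
    G.powerset.finite_toSet.subset fun M hM ↦ mem_coe.2 (mem_powerset.2 hM.1.1)
  obtain ⟨M, hM, hmax⟩ := Set.exists_max_image _ (mweight wt) hfin hG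
  exact ⟨M, hM, fun M' hM' hf ↦ hmax M' ⟨hM', hf⟩⟩

end Graph

theorem stmt7_general (k : ℕ) (wt : ℕ × ℕ → ℝ) (f : ℕ → ℕ) (H : Finset (ℕ × ℕ)) :
    ((∃ M, IsKMatchingE (CompactG wt f H) M k ∧ NiceE f M) ↔
      (∃ M, IsKMatchingE (RedComG wt f k H) M k ∧ NiceE f M)) ∧
    ((∃ M, IsKMatchingE (CompactG wt f H) M k ∧ NiceE f M) →
      ∃ M₁ M₂ : Finset (ℕ × ℕ),
        IsKMatchingE (CompactG wt f H) M₁ k ∧ NiceE f M₁ ∧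
        (∀ M, IsKMatchingE (CompactG wt f H) M k → NiceE f M →
          mweight wt M ≤ mweight wt M₁) ∧
        IsKMatchingE (RedComG wt f k H) M₂ k ∧ NiceE f M₂ ∧
        (∀ M, IsKMatchingE (RedComG wt f k H) M k → NiceE f M →
          mweight wt M ≤ mweight wt M₂) ∧
        mweight wt M₁ = mweight wt M₂) := by
  refine ⟨exists_niceE_compactG_iff_redComG, fun hC ↦ ?_⟩
  obtain ⟨M₁, ⟨hM₁, hf₁⟩, hmax₁⟩ := exists_mweight_max (wt := wt) hC
  obtain ⟨M₂, ⟨hM₂, hf₂⟩, hmax₂⟩ :=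
    exists_mweight_max (wt := wt) (exists_niceE_compactG_iff_redComG.1 hC)
  obtain ⟨M, hM, hf, hle⟩ := exists_redComG_mweight_le hM₁ hf₁
  exact ⟨M₁, M₂, hM₁, hf₁, hmax₁, hM₂, hf₂, hmax₂,
    (hle.trans (hmax₂ M hM hf)).antisymm (hmax₁ M₂ (hM₂.mono redComG_subset_compactG) hf₂)⟩

/- **Statement 7.** Let `G` be a simple graph on `{0,…,n-1}` with nonnegative
edge weights, `k ≥ 1`, `f : V → {0,…,4k²-1}`, and `H` a subgraph of `G`.
Then `CompactG wt f H` has a nice `k`-matching iff `RedComG wt f k H` does;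
moreover, if so, the maximum weight of a nice `k`-matching in `CompactG`
equals the maximum weight of a nice `k`-matching in `RedComG`. -/
theorem stmt7 (n k : ℕ) (hk : 1 ≤ k)
    (wt : ℕ × ℕ → ℝ) (hwt : ∀ e, 0 ≤ wt e)
    (E : Finset (ℕ × ℕ)) (hE : ∀ e ∈ E, e.1 < e.2 ∧ e.2 < n)
    (f : ℕ → ℕ) (hf : ∀ v, v < n → f v < 4 * k ^ 2)
    (H : Finset (ℕ × ℕ)) (hH : H ⊆ E) :
    ((∃ M, IsKMatchingE (CompactG wt f H) M k ∧ NiceE f M) ↔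
      (∃ M, IsKMatchingE (RedComG wt f k H) M k ∧ NiceE f M)) ∧
    ((∃ M, IsKMatchingE (CompactG wt f H) M k ∧ NiceE f M) →
      ∃ M₁ M₂ : Finset (ℕ × ℕ),
        IsKMatchingE (CompactG wt f H) M₁ k ∧ NiceE f M₁ ∧
        (∀ M, IsKMatchingE (CompactG wt f H) M k → NiceE f M →
          mweight wt M ≤ mweight wt M₁) ∧
        IsKMatchingE (RedComG wt f k H) M₂ k ∧ NiceE f M₂ ∧
        (∀ M, IsKMatchingE (RedComG wt f k H) M k → NiceE f M →
          mweight wt M ≤ mweight wt M₂) ∧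
        mweight wt M₁ = mweight wt M₂) :=
  stmt7_general k wt f H
end

section
/- Let Φ be a finite simple graph with edge weights wt : E(Φ) → ℝ≥0, let ≺ be a strict linear order on E(Φ) such that e ≺ e' implies wt(e) ≤ wt(e'), and let k ≥ 1. Let H be the subgraph of Φ consisting of every edge e = uv such that e is among the 8k largest (with respect to ≺) edges incident to u and among the 8k largest edges incident to v (all such edges if a vertex has fewer than 8k incident edges). If Φ contains a k-matching, then H contains a k-matching whose weight equals the maximum weight of a k-matching of Φ; in particular, some maximum-weight k-matching of Φ is entirely contained in H. -/
open Finset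
open Classical

/-!
Among the `k`-matchings of maximum weight choose one, `M`, that is also as high as possible for
`≺`. Suppose `e ∈ M` has at least `2k - 1` larger edges at one of its endpoints `v`. The other
`k - 1` edges of `M` cover at most `2(k - 1)` vertices, and none of these is `v`; as distinct edges
at `v` have distinct far endpoints, one of the larger edges avoids them all. Exchanging it for `e`
gives a higher `k`-matching of no smaller weight, a contradiction. So `2k - 1` edges per endpoint
already suffice.
-/

section Exchange

variable {α R : Type*} {s : Finset α} {lt : α → α → Prop}

lemma card_filter_lt_card_filter_of_rel (hirr : ∀ a ∈ s, ¬ lt a a)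
    (htrans : ∀ a ∈ s, ∀ b ∈ s, ∀ c ∈ s, lt a b → lt b c → lt a c)
    {a b : α} (ha : a ∈ s) (hb : b ∈ s) (hab : lt a b) :
    #{x ∈ s | lt x a} < #{x ∈ s | lt x b} := by
  refine card_lt_card <| (ssubset_iff_of_subset fun x hx ↦ ?_).2 ⟨a, ?_, ?_⟩
  · obtain ⟨hxs, hxa⟩ := mem_filter.1 hx
    exact mem_filter.2 ⟨hxs, htrans x hxs a ha b hb hxa hab⟩
  · exact mem_filter.2 ⟨ha, hab⟩
  · exact fun h ↦ hirr a ha (mem_filter.1 h).2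

theorem exists_max_sum_forall_insert_erase_notMem
    [AddCommMonoid R] [LinearOrder R] [IsOrderedAddMonoid R] {wt : α → R}
    (hirr : ∀ a ∈ s, ¬ lt a a)
    (htrans : ∀ a ∈ s, ∀ b ∈ s, ∀ c ∈ s, lt a b → lt b c → lt a c)
    (hmono : ∀ a ∈ s, ∀ b ∈ s, lt a b → wt a ≤ wt b)
    {𝓜 : Finset (Finset α)} (h𝓜 : 𝓜.Nonempty) (hsub : ∀ M ∈ 𝓜, M ⊆ s) :
    ∃ M ∈ 𝓜, (∀ M' ∈ 𝓜, ∑ a ∈ M', wt a ≤ ∑ a ∈ M, wt a) ∧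
      ∀ a ∈ M, ∀ b ∈ s, b ∉ M → lt a b → insert b (M.erase a) ∉ 𝓜 := by
  let rank (a : α) : ℕ := #{x ∈ s | lt x a}
  let height (M : Finset α) : R ×ₗ ℕ := toLex (∑ a ∈ M, wt a, ∑ a ∈ M, rank a)
  obtain ⟨M, hM, hmax⟩ := exists_max_image 𝓜 height h𝓜
  refine ⟨M, hM, fun M' hM' ↦ Prod.Lex.monotone_fst _ _ (hmax M' hM'), ?_⟩
  intro a ha b hb hbM hab hexch
  have has := hsub M hM ha
  have hb' : b ∉ M.erase a := fun h ↦ hbM (mem_of_mem_erase h)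
  have hwt : ∑ x ∈ M, wt x ≤ ∑ x ∈ insert b (M.erase a), wt x := by
    rw [sum_insert hb', ← add_sum_erase M wt ha]
    gcongr
    exact hmono a has b hb hab
  have hrank : ∑ x ∈ M, rank x < ∑ x ∈ insert b (M.erase a), rank x := by
    rw [sum_insert hb', ← add_sum_erase M rank ha]
    gcongr
    exact card_filter_lt_card_filter_of_rel hirr htrans has hb hab
  have hlt : height M < height (insert b (M.erase a)) :=
    Prod.Lex.toLex_lt_toLex'.2 ⟨hwt, fun _ ↦ hrank⟩
  exact (hmax _ hexch).not_gt hlt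

end Exchange

section Matching

variable {V E R : Type*} {ends : E → Sym2 V} {Φ : Finset E} {k : ℕ}

/-- The `k`-matchings of a finite graph whose edges are the elements of `Φ`, the endpoints of an
edge `e` being the two members of `ends e`. An edge type separate from `Sym2 V` lets the weights
and the order on edges be given on any encoding of the edges. -/
noncomputable def kMatchings (ends : E → Sym2 V) (Φ : Finset E) (k : ℕ) : Finset (Finset E) :=
  {M ∈ Φ.powersetCard k | (M : Set E).PairwiseDisjoint fun e ↦ (ends e).toFinset}

/-- The edges of `Φ` that are among the `d` largest edges of `Φ`, with respect to `lt`, at each of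
their endpoints. -/
noncomputable def locallyLargestEdges (ends : E → Sym2 V) (lt : E → E → Prop) (Φ : Finset E)
    (d : ℕ) : Finset E :=
  {e ∈ Φ | ∀ v ∈ ends e, #{e' ∈ Φ | v ∈ ends e' ∧ lt e e'} < d}

lemma mem_kMatchings {M : Finset E} :
    M ∈ kMatchings ends Φ k ↔
      M ⊆ Φ ∧ #M = k ∧ (M : Set E).PairwiseDisjoint fun e ↦ (ends e).toFinset := by
  rw [kMatchings, mem_filter, mem_powersetCard, and_assoc]

lemma exists_mem_disjoint_of_card_lt_card {S : Finset E} {B : Finset V} {v : V}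
    (hinj : Set.InjOn ends S) (hS : ∀ e ∈ S, v ∈ ends e) (hv : v ∉ B) (hcard : #B < #S) :
    ∃ e ∈ S, Disjoint (ends e).toFinset B := by
  by_contra! hmeet
  refine hcard.not_ge <| (card_le_card_of_injOn ends (fun e he ↦ ?_) hinj).trans
    (card_image_le (f := fun w ↦ s(v, w)))
  obtain ⟨w, hwe, hwB⟩ := not_disjoint_iff.1 (hmeet e he)
  have hvw : v ≠ w := fun h ↦ hv (h ▸ hwB)
  have hends : ends e = s(v, w) :=
    (Sym2.mem_and_mem_iff hvw).1 ⟨hS e he, Sym2.mem_toFinset.1 hwe⟩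
  exact mem_image.2 ⟨w, hwB, hends.symm⟩

lemma card_biUnion_toFinset_le (ends : E → Sym2 V) (M : Finset E) :
    #(M.biUnion fun e ↦ (ends e).toFinset) ≤ #M * 2 :=
  card_biUnion_le_card_mul _ _ _ fun e _ ↦ by
    rw [Sym2.card_toFinset]
    split_ifs <;> norm_num

lemma insert_erase_mem_kMatchings {M : Finset E} {e p : E} (hM : M ∈ kMatchings ends Φ k)
    (he : e ∈ M) (hp : p ∈ Φ) (hpM : p ∉ M)
    (hdisj : ∀ q ∈ M.erase e, Disjoint (ends p).toFinset (ends q).toFinset) :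
    insert p (M.erase e) ∈ kMatchings ends Φ k := by
  obtain ⟨hsub, hcard, hpair⟩ := mem_kMatchings.1 hM
  have hpe : p ∉ M.erase e := fun h ↦ hpM (mem_of_mem_erase h)
  refine mem_kMatchings.2 ⟨insert_subset hp ((erase_subset e M).trans hsub), ?_, ?_⟩
  · rw [card_insert_of_notMem hpe, card_erase_add_one he, hcard]
  · rw [coe_insert]
    exact (hpair.subset (erase_subset e M)).insert fun q hq _ ↦ hdisj q hq

lemma exists_insert_erase_mem_kMatchings {M S : Finset E} {e : E} {v : V}
    (hinj : Set.InjOn ends Φ) (hM : M ∈ kMatchings ends Φ k) (he : e ∈ M) (hve : v ∈ ends e)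
    (hSΦ : S ⊆ Φ) (hS : ∀ p ∈ S, v ∈ ends p) (heS : e ∉ S) (hcard : 2 * k ≤ #S + 1) :
    ∃ p ∈ S, p ∉ M ∧ insert p (M.erase e) ∈ kMatchings ends Φ k := by
  obtain ⟨-, hMcard, hpair⟩ := mem_kMatchings.1 hM
  have hfree : ∀ q ∈ M.erase e, v ∉ ends q := fun q hq hvq ↦
    disjoint_left.1 (hpair he (mem_of_mem_erase hq) (ne_of_mem_erase hq).symm)
      (Sym2.mem_toFinset.2 hve) (Sym2.mem_toFinset.2 hvq)
  let B := (M.erase e).biUnion fun q ↦ (ends q).toFinset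
  have hvB : v ∉ B := by simpa [B, -mem_erase] using hfree
  have hBS : #B < #S := by
    have hB : #B ≤ #(M.erase e) * 2 := card_biUnion_toFinset_le ends (M.erase e)
    have := card_erase_add_one he
    omega
  obtain ⟨p, hpS, hpB⟩ :=
    exists_mem_disjoint_of_card_lt_card (hinj.mono hSΦ) hS hvB hBS
  have hpM : p ∉ M := fun h ↦
    hfree p (mem_erase.2 ⟨fun hpe ↦ heS (hpe ▸ hpS), h⟩) (hS p hpS)
  exact ⟨p, hpS, hpM, insert_erase_mem_kMatchings hM he (hSΦ hpS) hpM
    ((disjoint_biUnion_right _ _ _).1 hpB)⟩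

theorem stmt8_general [AddCommMonoid R] [LinearOrder R] [IsOrderedAddMonoid R] {wt : E → R}
    {lt : E → E → Prop} {d : ℕ} (hinj : Set.InjOn ends Φ)
    (hirr : ∀ e ∈ Φ, ¬ lt e e)
    (htrans : ∀ e ∈ Φ, ∀ e' ∈ Φ, ∀ e'' ∈ Φ, lt e e' → lt e' e'' → lt e e'')
    (hmono : ∀ e ∈ Φ, ∀ e' ∈ Φ, lt e e' → wt e ≤ wt e')
    (hd : 2 * k ≤ d + 1) (hex : (kMatchings ends Φ k).Nonempty) :
    ∃ M ∈ kMatchings ends (locallyLargestEdges ends lt Φ d) k,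
      ∀ M' ∈ kMatchings ends Φ k, ∑ e ∈ M', wt e ≤ ∑ e ∈ M, wt e := by
  obtain ⟨M, hM, hmax, hstable⟩ := exists_max_sum_forall_insert_erase_notMem hirr htrans hmono hex
    fun M hM ↦ (mem_kMatchings.1 hM).1
  obtain ⟨hMΦ, hMk⟩ := mem_kMatchings.1 hM
  refine ⟨M, mem_kMatchings.2 ⟨fun e he ↦ mem_filter.2 ⟨hMΦ he, fun v hv ↦ ?_⟩, hMk⟩, hmax⟩
  by_contra! hlarge
  let larger : Finset E := {p ∈ Φ | v ∈ ends p ∧ lt e p}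
  have hmem : ∀ p ∈ larger, p ∈ Φ ∧ v ∈ ends p ∧ lt e p := fun p hp ↦ mem_filter.1 hp
  have he_larger : e ∉ larger := fun h ↦ hirr e (hMΦ he) (hmem e h).2.2
  have hcard : 2 * k ≤ #larger + 1 := hd.trans (by gcongr)
  obtain ⟨p, hp, hpM, hexch⟩ := exists_insert_erase_mem_kMatchings hinj hM he hv
    (filter_subset _ Φ) (fun p hp ↦ (hmem p hp).2.1) he_larger hcard
  exact hstable e he p (hmem p hp).1 hpM (hmem p hp).2.2 hexch

end Matching

section OrderedPairs

variable {Φ : Finset (ℕ × ℕ)}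

lemma injOn_sym2Mk_of_fst_lt_snd (hΦ : ∀ e ∈ Φ, e.1 < e.2) :
    Set.InjOn (fun e : ℕ × ℕ ↦ s(e.1, e.2)) Φ := by
  intro e he e' he' h
  have := hΦ e he
  have := hΦ e' he'
  rcases Sym2.eq_iff.1 h with h | h
  · exact Prod.ext h.1 h.2
  · omega

lemma isKMatchingE_iff_mem_kMatchings {M : Finset (ℕ × ℕ)} {k : ℕ} :
    IsKMatchingE Φ M k ↔ M ∈ kMatchings (fun e ↦ s(e.1, e.2)) Φ k := by
  rw [mem_kMatchings]
  refine and_congr_right' <| and_congr_right' <| forall₂_congr fun e _ ↦ forall₂_congr fun e' _ ↦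
    imp_congr_right fun _ ↦ ?_
  simp only [Function.onFun, Sym2.toFinset_mk_eq, disjoint_insert_left, disjoint_singleton_left,
    mem_insert, mem_singleton, not_or, and_assoc, ne_eq]

lemma mem_locallyLargestEdges_sym2Mk {lt : ℕ × ℕ → ℕ × ℕ → Prop} {d : ℕ} {e : ℕ × ℕ} :
    e ∈ locallyLargestEdges (fun e ↦ s(e.1, e.2)) lt Φ d ↔ e ∈ Φ ∧
      #{e' ∈ Φ | (e'.1 = e.1 ∨ e'.2 = e.1) ∧ lt e e'} < d ∧
      #{e' ∈ Φ | (e'.1 = e.2 ∨ e'.2 = e.2) ∧ lt e e'} < d := by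
  simp [locallyLargestEdges, eq_comm]

end OrderedPairs

/- **Statement 8.** Let `Φ` be a finite simple graph with nonnegative edge
weights, `lt` a strict linear order on `E(Φ)` with `lt e e' → wt e ≤ wt e'`,
and `k ≥ 1`.  Let `H` consist of every edge of `Φ` that is among the `8k`
`lt`-largest edges incident to each of its two endpoints (an edge `e` is
among the `m` largest edges incident to `v` iff at most `m-1` incident edges
are `lt`-larger than `e`).  If `Φ` contains a `k`-matching, then `H` contains
a `k`-matching whose weight equals the maximum weight of a `k`-matching
of `Φ`. -/
theorem stmt8 (k : ℕ) (hk : 1 ≤ k)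
    (wt : ℕ × ℕ → ℝ) (hwt : ∀ e, 0 ≤ wt e)
    (Φ : Finset (ℕ × ℕ)) (hΦ : ∀ e ∈ Φ, e.1 < e.2)
    (lt : ℕ × ℕ → ℕ × ℕ → Prop)
    (hirr : ∀ e ∈ Φ, ¬ lt e e)
    (htrans : ∀ e ∈ Φ, ∀ e' ∈ Φ, ∀ e'' ∈ Φ, lt e e' → lt e' e'' → lt e e'')
    (htotal : ∀ e ∈ Φ, ∀ e' ∈ Φ, e ≠ e' → lt e e' ∨ lt e' e)
    (hmono : ∀ e ∈ Φ, ∀ e' ∈ Φ, lt e e' → wt e ≤ wt e')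
    (H : Finset (ℕ × ℕ))
    (hH : ∀ e : ℕ × ℕ, e ∈ H ↔ e ∈ Φ ∧
      (Φ.filter (fun e' => (e'.1 = e.1 ∨ e'.2 = e.1) ∧ lt e e')).card < 8 * k ∧
      (Φ.filter (fun e' => (e'.1 = e.2 ∨ e'.2 = e.2) ∧ lt e e')).card < 8 * k)
    (hex : ∃ M, IsKMatchingE Φ M k) :
    ∃ M, IsKMatchingE H M k ∧
      ∀ M', IsKMatchingE Φ M' k → mweight wt M' ≤ mweight wt M := by
  obtain rfl : H = locallyLargestEdges (fun e ↦ s(e.1, e.2)) lt Φ (8 * k) :=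
    Finset.ext fun e ↦ (hH e).trans mem_locallyLargestEdges_sym2Mk.symm
  simp only [isKMatchingE_iff_mem_kMatchings] at hex ⊢
  exact stmt8_general (injOn_sym2Mk_of_fst_lt_snd hΦ) hirr htrans hmono (by omega) hex
end

section
/- Let H be a finite simple graph with edge weights wt : E(H) → ℝ≥0, let ≺ be a strict linear order on E(H) such that e ≺ e' implies wt(e) ≤ wt(e'), and let k ≥ 1. Suppose every vertex of H is incident to at most 8k edges, and that H contains a k-matching. Let q = k(16k-1) and let E' be the set consisting of the q largest edges of H with respect to ≺ (all edges of H if |E(H)| ≤ q). Then E' contains a k-matching whose weight equals the maximum weight of a k-matching of H. -/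
open Finset
open Classical

/-!
If a `k`-matching has an edge `e` outside the `q` largest, then at least `q` edges are larger than
`e`. In a hypergraph with edges of size at most `r` and degrees at most `d`, each of the other
`k - 1` edges of the matching coincides with or meets at most `r (d - 1) + 1` edges, so if
`q > (k - 1) (r (d - 1) + 1)`, some edge larger than `e` avoids them all. Exchanging `e` for it
loses no weight and lowers the sum, over the matching, of the number of larger edges, so repeated
exchanges end in a matching among the `q` largest edges. For graphs `r = 2`, and `d = 8 k` gives the
bound `(k - 1) (16 k - 1) < k (16 k - 1)`.
-/

/-- A matching of size `k` in the hypergraph with edge set `H`, in which an edge `e` has the vertex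
set `ends e`; distinct edges may have the same vertex set. -/
structure IsKMatching {α V : Type*} (ends : α → Finset V) (H M : Finset α) (k : ℕ) : Prop where
  subset : M ⊆ H
  card_eq : #M = k
  pairwiseDisjoint : (M : Set α).PairwiseDisjoint ends

/-- The `q` largest elements of `H` with respect to `lt`, encoded as those exceeded by fewer than
`q` elements of `H`; there may be more than `q` of them if `lt` is not total on `H`. -/
noncomputable def largest {α : Type*} (lt : α → α → Prop) (H : Finset α) (q : ℕ) : Finset α :=
  {e ∈ H | #{f ∈ H | lt e f} < q}

/-- The neighbours of the edge `e` in the line graph of the hypergraph `H`. -/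
noncomputable def adjacentEdges {α V : Type*} (ends : α → Finset V) (H : Finset α) (e : α) :
    Finset α :=
  {f ∈ H | f ≠ e ∧ ¬ Disjoint (ends f) (ends e)}

section Hypergraph

variable {α V : Type*} {ends : α → Finset V} {lt : α → α → Prop} {H M : Finset α} {e f : α}
  {k q r d D : ℕ}

lemma card_filter_lt_of_lt (hirr : ∀ e ∈ H, ¬ lt e e)
    (htrans : ∀ e ∈ H, ∀ e' ∈ H, ∀ e'' ∈ H, lt e e' → lt e' e'' → lt e e'')
    (he : e ∈ H) (hf : f ∈ H) (hef : lt e f) :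
    #{g ∈ H | lt f g} < #{g ∈ H | lt e g} := by
  refine card_lt_card ((ssubset_iff_of_subset ?_).2 ⟨f, ?_, ?_⟩)
  · intro g hg
    obtain ⟨hgH, hfg⟩ := mem_filter.1 hg
    exact mem_filter.2 ⟨hgH, htrans e he f hf g hgH hef hfg⟩
  · exact mem_filter.2 ⟨hf, hef⟩
  · exact fun h => hirr f hf (mem_filter.1 h).2

lemma card_adjacentEdges_le (hdeg : ∀ v, #{f ∈ H | v ∈ ends f} ≤ d) (he : e ∈ H)
    (hr : #(ends e) ≤ r) : #(adjacentEdges ends H e) ≤ r * (d - 1) := by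
  have hcover : adjacentEdges ends H e ⊆
      (ends e).biUnion fun v => {f ∈ H | v ∈ ends f}.erase e := by
    intro f hf
    obtain ⟨hfH, hfe, hmeet⟩ := mem_filter.1 hf
    obtain ⟨v, hvf, hve⟩ := not_disjoint_iff.1 hmeet
    exact mem_biUnion.2 ⟨v, hve, mem_erase.2 ⟨hfe, mem_filter.2 ⟨hfH, hvf⟩⟩⟩
  have hstar : ∀ v ∈ ends e, #({f ∈ H | v ∈ ends f}.erase e) ≤ d - 1 := by
    intro v hv
    rw [card_erase_of_mem (mem_filter.2 ⟨he, hv⟩)]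
    exact Nat.sub_le_sub_right (hdeg v) 1
  calc #(adjacentEdges ends H e)
      ≤ #(ends e) * (d - 1) := (card_le_card hcover).trans (card_biUnion_le_card_mul _ _ _ hstar)
    _ ≤ r * (d - 1) := Nat.mul_le_mul_right _ hr

lemma exists_disjoint_of_card_lt (hD : ∀ e ∈ H, #(adjacentEdges ends H e) ≤ D) {S : Finset α}
    (hM : M ⊆ H) (hS : S ⊆ H) (hcard : #M * (D + 1) < #S) :
    ∃ f ∈ S, f ∉ M ∧ ∀ g ∈ M, Disjoint (ends f) (ends g) := by
  have hblocked : #(M.biUnion fun g => insert g (adjacentEdges ends H g)) ≤ #M * (D + 1) :=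
    card_biUnion_le_card_mul _ _ _ fun g hg =>
      (card_insert_le _ _).trans (Nat.succ_le_succ (hD g (hM hg)))
  obtain ⟨f, hfS, hf⟩ := exists_mem_notMem_of_card_lt_card (hblocked.trans_lt hcard)
  have hfM : f ∉ M := fun h => hf (mem_biUnion.2 ⟨f, h, mem_insert_self _ _⟩)
  refine ⟨f, hfS, hfM, fun g hg => ?_⟩
  by_contra hmeet
  have hadj : f ∈ adjacentEdges ends H g :=
    mem_filter.2 ⟨hS hfS, (ne_of_mem_of_not_mem hg hfM).symm, hmeet⟩
  exact hf (mem_biUnion.2 ⟨g, hg, mem_insert_of_mem hadj⟩)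

lemma IsKMatching.insert_erase (hM : IsKMatching ends H M k) (he : e ∈ M) (hf : f ∈ H)
    (hfM : f ∉ M.erase e) (hdisj : ∀ g ∈ M.erase e, Disjoint (ends f) (ends g)) :
    IsKMatching ends H (insert f (M.erase e)) k where
  subset := insert_subset hf ((erase_subset e M).trans hM.subset)
  card_eq := by rw [card_insert_of_notMem hfM, card_erase_add_one he, hM.card_eq]
  pairwiseDisjoint := by
    rw [coe_insert]
    exact (hM.pairwiseDisjoint.subset (erase_subset e M)).insert fun g hg _ => hdisj g hg

lemma IsKMatching.exists_swap_of_notMem_largest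
    (hD : ∀ e ∈ H, #(adjacentEdges ends H e) ≤ D) (hq : (k - 1) * (D + 1) < q)
    (hM : IsKMatching ends H M k) (he : e ∈ M) (hne : e ∉ largest lt H q) :
    ∃ f ∈ H, lt e f ∧ f ∉ M.erase e ∧ IsKMatching ends H (insert f (M.erase e)) k := by
  have hlarger : q ≤ #{f ∈ H | lt e f} :=
    not_lt.1 fun h => hne (mem_filter.2 ⟨hM.subset he, h⟩)
  have hcard : #(M.erase e) * (D + 1) < #{f ∈ H | lt e f} := by
    rw [card_erase_of_mem he, hM.card_eq]
    exact hq.trans_le hlarger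
  obtain ⟨f, hf, hfM, hdisj⟩ := exists_disjoint_of_card_lt hD
    ((erase_subset e M).trans hM.subset) (filter_subset _ H) hcard
  obtain ⟨hfH, hef⟩ := mem_filter.1 hf
  exact ⟨f, hfH, hef, hfM, hM.insert_erase he hfH hfM hdisj⟩

lemma IsKMatching.exists_largest_sum_le {R : Type*} [AddCommMonoid R] [Preorder R]
    [AddRightMono R] {wt : α → R} (hirr : ∀ e ∈ H, ¬ lt e e)
    (htrans : ∀ e ∈ H, ∀ e' ∈ H, ∀ e'' ∈ H, lt e e' → lt e' e'' → lt e e'')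
    (hmono : ∀ e ∈ H, ∀ e' ∈ H, lt e e' → wt e ≤ wt e')
    (hD : ∀ e ∈ H, #(adjacentEdges ends H e) ≤ D) (hq : (k - 1) * (D + 1) < q)
    (hM : IsKMatching ends H M k) :
    ∃ N, IsKMatching ends (largest lt H q) N k ∧ ∑ e ∈ M, wt e ≤ ∑ e ∈ N, wt e := by
  induction hn : ∑ e ∈ M, #{f ∈ H | lt e f} using Nat.strong_induction_on generalizing M with
  | _ n ih =>
    by_cases hsub : M ⊆ largest lt H q
    · exact ⟨M, ⟨hsub, hM.card_eq, hM.pairwiseDisjoint⟩, le_rfl⟩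
    obtain ⟨e, he, hne⟩ := not_subset.1 hsub
    obtain ⟨f, hf, hef, hfM, hswap⟩ := hM.exists_swap_of_notMem_largest hD hq he hne
    have hweight : ∑ g ∈ M, wt g ≤ ∑ g ∈ insert f (M.erase e), wt g := by
      rw [sum_insert hfM, ← add_sum_erase M wt he]
      exact add_le_add_left (hmono e (hM.subset he) f hf hef) _
    have hrank : ∑ g ∈ insert f (M.erase e), #{f ∈ H | lt g f} < n := by
      rw [← hn, sum_insert hfM, ← add_sum_erase M _ he]
      exact Nat.add_lt_add_right (card_filter_lt_of_lt hirr htrans (hM.subset he) hf hef) _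
    obtain ⟨N, hN, hle⟩ := ih _ hrank hswap rfl
    exact ⟨N, hN, hweight.trans hle⟩

lemma IsKMatching.exists_max_sum {R : Type*} [AddCommMonoid R] [LinearOrder R]
    (hM : IsKMatching ends H M k) (wt : α → R) :
    ∃ N, IsKMatching ends H N k ∧
      ∀ M', IsKMatching ends H M' k → ∑ e ∈ M', wt e ≤ ∑ e ∈ N, wt e := by
  obtain ⟨N, hN, hmax⟩ := exists_max_image {N ∈ H.powerset | IsKMatching ends H N k}
    (fun N => ∑ e ∈ N, wt e) ⟨M, mem_filter.2 ⟨mem_powerset.2 hM.subset, hM⟩⟩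
  exact ⟨N, (mem_filter.1 hN).2,
    fun M' hM' => hmax M' (mem_filter.2 ⟨mem_powerset.2 hM'.subset, hM'⟩)⟩

theorem stmt9_general {R : Type*} [AddCommMonoid R] [LinearOrder R] [AddRightMono R]
    (wt : α → R) (hirr : ∀ e ∈ H, ¬ lt e e)
    (htrans : ∀ e ∈ H, ∀ e' ∈ H, ∀ e'' ∈ H, lt e e' → lt e' e'' → lt e e'')
    (hmono : ∀ e ∈ H, ∀ e' ∈ H, lt e e' → wt e ≤ wt e')
    (hr : ∀ e ∈ H, #(ends e) ≤ r) (hdeg : ∀ v, #{e ∈ H | v ∈ ends e} ≤ d)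
    (hq : (k - 1) * (r * (d - 1) + 1) < q) (hex : ∃ M, IsKMatching ends H M k) :
    ∃ M, IsKMatching ends (largest lt H q) M k ∧
      ∀ M', IsKMatching ends H M' k → ∑ e ∈ M', wt e ≤ ∑ e ∈ M, wt e := by
  obtain ⟨M₀, hM₀⟩ := hex
  obtain ⟨M, hM, hmax⟩ := hM₀.exists_max_sum wt
  obtain ⟨N, hN, hle⟩ := hM.exists_largest_sum_le hirr htrans hmono
    (fun e he => card_adjacentEdges_le hdeg he (hr e he)) hq
  exact ⟨N, hN, fun M' hM' => (hmax M' hM').trans hle⟩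

end Hypergraph

/-- The endpoints of an edge of an ordinary graph, through which it becomes a hypergraph. -/
def endpoints (e : ℕ × ℕ) : Finset ℕ := {e.1, e.2}

lemma mem_endpoints {v : ℕ} {e : ℕ × ℕ} : v ∈ endpoints e ↔ e.1 = v ∨ e.2 = v := by
  simp only [endpoints, mem_insert, mem_singleton, eq_comm]

lemma isMatchingE_iff_pairwiseDisjoint {M : Finset (ℕ × ℕ)} :
    IsMatchingE M ↔ (M : Set (ℕ × ℕ)).PairwiseDisjoint endpoints := by
  simp only [IsMatchingE, Set.PairwiseDisjoint, Set.Pairwise, mem_coe, Function.onFun, endpoints,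
    disjoint_insert_left, disjoint_singleton_left, mem_insert, mem_singleton, not_or,
    and_assoc, ne_eq]

lemma isKMatchingE_iff_isKMatching {H M : Finset (ℕ × ℕ)} {k : ℕ} :
    IsKMatchingE H M k ↔ IsKMatching endpoints H M k := by
  rw [IsKMatchingE, isMatchingE_iff_pairwiseDisjoint]
  exact ⟨fun ⟨hsub, hcard, hdisj⟩ => ⟨hsub, hcard, hdisj⟩,
    fun ⟨hsub, hcard, hdisj⟩ => ⟨hsub, hcard, hdisj⟩⟩

/- **Statement 9.** Let `H` be a finite simple graph with nonnegative edge
weights, `lt` a strict linear order on `E(H)` with `lt e e' → wt e ≤ wt e'`,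
and `k ≥ 1`.  Suppose every vertex is incident to at most `8k` edges and `H`
has a `k`-matching.  Let `q = k(16k-1)` and let `E'` consist of the `q`
`lt`-largest edges of `H` (an edge belongs to `E'` iff fewer than `q` edges
of `H` are `lt`-larger than it).  Then `E'` contains a `k`-matching whose
weight equals the maximum weight of a `k`-matching of `H`. -/
theorem stmt9 (k : ℕ) (hk : 1 ≤ k)
    (wt : ℕ × ℕ → ℝ) (hwt : ∀ e, 0 ≤ wt e)
    (H : Finset (ℕ × ℕ)) (hHs : ∀ e ∈ H, e.1 < e.2)
    (lt : ℕ × ℕ → ℕ × ℕ → Prop)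
    (hirr : ∀ e ∈ H, ¬ lt e e)
    (htrans : ∀ e ∈ H, ∀ e' ∈ H, ∀ e'' ∈ H, lt e e' → lt e' e'' → lt e e'')
    (htotal : ∀ e ∈ H, ∀ e' ∈ H, e ≠ e' → lt e e' ∨ lt e' e)
    (hmono : ∀ e ∈ H, ∀ e' ∈ H, lt e e' → wt e ≤ wt e')
    (hdeg : ∀ v : ℕ, (H.filter (fun e => e.1 = v ∨ e.2 = v)).card ≤ 8 * k)
    (hex : ∃ M, IsKMatchingE H M k)
    (E' : Finset (ℕ × ℕ))
    (hE' : ∀ e : ℕ × ℕ, e ∈ E' ↔ e ∈ H ∧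
      (H.filter (fun e' => lt e e')).card < k * (16 * k - 1)) :
    ∃ M, IsKMatchingE E' M k ∧
      ∀ M', IsKMatchingE H M' k → mweight wt M' ≤ mweight wt M := by
  obtain rfl : E' = largest lt H (k * (16 * k - 1)) := by ext e; rw [hE', largest, mem_filter]
  have hq : (k - 1) * (2 * (8 * k - 1) + 1) < k * (16 * k - 1) :=
    Nat.mul_lt_mul_of_lt_of_le (by lia) (by lia) (by lia)
  simp only [isKMatchingE_iff_isKMatching, ← mem_endpoints] at hex hdeg ⊢
  exact stmt9_general wt hirr htrans hmono (fun _ _ => card_le_two)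
    (fun v => by convert hdeg v) hq hex
end
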